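/- arXiv:1712.00887 — 2 statements merged into one kernel-verified Lean document; each statement's English description precedes it below -/
import Mathlib

section
/- Let G be a finite simple graph. Then reg I(G) = 2 if and only if G is co-chordal, i.e., the complement graph G^c is chordal. -/
/-!
The lower bound `reg I(G) ≥ 2` is a degree count (`two_le_of_res`): a resolution of `I(G) ≠ 0` has a
generator with nonzero image in an ideal generated by quadrics. So `reg I(G) = 2` says precisely
that some graded free resolution has its `i`-th module generated in degrees at most `i + 2`.

If `Gᶜ` is chordal, Dirac's theorem (`exists_simplicial`) provides a vertex `v` of `Gᶜ` whose
neighbours in `Gᶜ` form a clique. Let `N` be the set of neighbours of `v` in `G` and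
`L = (x_u : u ∈ N)`. Every edge of `G` avoiding `v` meets `N`, so `I(G - v) ≤ L` and
`I(G) = I(G - v) + x_v L`. Since `x_v` is a nonzerodivisor modulo `I(G - v)`, the mapping cone of a
lift of the inclusion `I(G - v) ≤ L` to linear resolutions is a linear resolution of `I(G)`
(`LinRes.cone`); induction on the number of vertices concludes (`linRes_of_cochordal`). The ideal
`L` is treated by the same cone construction, adding one variable at a time.

If `Gᶜ` has a cycle of length `m ≥ 4` without chords, then no resolution with shifts at most `i + 2`
exists. Such a resolution forces the Koszul homology `H_{m - 3}(x_1, …, x_n; I)` to vanish in degree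
`m`: shifting along the resolution moves the class to homological degree `0`, where it would be in
the degree of a generator (`exists_kd_eq_of_res`). On the other hand the chordless cycle carries a
nonzero class of that bidegree, which reflects the nontrivial first homology of the circle
(`not_res_of_cycle`).
-/

open MvPolynomial

/-- The edge ideal `I(G)` of a finite simple graph `G` on vertex set `{x_1, ..., x_n}`:
the ideal of `S = K[x_1, ..., x_n]` generated by the monomials `x_i * x_j` for the
edges `{x_i, x_j}` of `G`. -/
noncomputable def edgeIdeal (K : Type) [Field K] {n : ℕ} (G : SimpleGraph (Fin n)) :
    Ideal (MvPolynomial (Fin n) K) :=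
  Ideal.span { m | ∃ i j, G.Adj i j ∧ m = X i * X j }

/-- A finite graded free resolution of an ideal `I` of the polynomial ring
`S = K[x_1, ..., x_n]`.  The `i`-th free module is `F i = ⨁_a S(-shift i a)`,
realized as `Fin (rank i) → S`; the differentials and the augmentation `F 0 → I ⊆ S`
are degree-preserving (each matrix entry is homogeneous of the appropriate degree),
and the complex `0 → F len → ⋯ → F 1 → F 0 → I → 0` is exact. -/
structure GradedFreeRes {n : ℕ} (K : Type) [Field K]
    (I : Ideal (MvPolynomial (Fin n) K)) where
  len : ℕ
  rank : ℕ → ℕ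
  rank_zero : ∀ i, len < i → rank i = 0
  shift : (i : ℕ) → Fin (rank i) → ℕ
  d : (i : ℕ) →
    ((Fin (rank (i + 1)) → MvPolynomial (Fin n) K) →ₗ[MvPolynomial (Fin n) K]
      (Fin (rank i) → MvPolynomial (Fin n) K))
  aug : (Fin (rank 0) → MvPolynomial (Fin n) K) →ₗ[MvPolynomial (Fin n) K]
      MvPolynomial (Fin n) K
  aug_range : LinearMap.range aug = I
  exact_zero : LinearMap.ker aug = LinearMap.range (d 0)
  exact_succ : ∀ i, LinearMap.ker (d i) = LinearMap.range (d (i + 1))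
  homog_aug : ∀ a, (aug (Pi.single a 1)).IsHomogeneous (shift 0 a)
  homog_d : ∀ i (b : Fin (rank (i + 1))) (a : Fin (rank i)),
    d i (Pi.single b 1) a = 0 ∨
      ∃ e, shift (i + 1) b = shift i a + e ∧ (d i (Pi.single b 1) a).IsHomogeneous e

/-- The Castelnuovo–Mumford regularity of an ideal `I ⊆ K[x_1, ..., x_n]`:
the least integer `r` such that `I` admits a (finite) graded free resolution whose
`i`-th free module is generated in degrees `≤ r + i`.  The minimum is attained by the
minimal graded free resolution, so this agrees with the usual definition
`reg I = max { j - i : β_{i,j}(I) ≠ 0 }`. -/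
noncomputable def reg {n : ℕ} (K : Type) [Field K]
    (I : Ideal (MvPolynomial (Fin n) K)) : ℤ :=
  sInf { r : ℤ | ∃ F : GradedFreeRes K I,
    ∀ i, ∀ a : Fin (F.rank i), (F.shift i a : ℤ) - (i : ℤ) ≤ r }

/-- A graph is chordal if every cycle of length at least 4 has a chord, i.e. an edge
of the graph joining two vertices of the cycle which is not an edge of the cycle. -/
def Chordal {V : Type} (G : SimpleGraph V) : Prop :=
  ∀ (v : V) (w : G.Walk v v), w.IsCycle → 4 ≤ w.length →
    ∃ a b, a ∈ w.support ∧ b ∈ w.support ∧ G.Adj a b ∧ s(a, b) ∉ w.edges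

/-! ### Homogeneous lifts along graded matrices -/

section Lift

variable {K : Type} [Field K] {σ : Type}

lemma exists_coeff_filter (Q : (σ →₀ ℕ) → Prop) [DecidablePred Q] (p : MvPolynomial σ K) :
    ∃ q : MvPolynomial σ K, ∀ c, coeff c q = if Q c then coeff c p else 0 := by
  classical
  refine ⟨∑ c ∈ p.support with Q c, monomial c (coeff c p), fun c => ?_⟩
  rw [coeff_sum]
  simp only [coeff_monomial]
  rw [Finset.sum_ite_eq']
  by_cases h : Q c <;> by_cases h' : coeff c p = 0 <;> simp [h, h']

/-- A solution `w` of `M w = z` with `z` concentrated in some degrees can be replaced by its part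
in those degrees. Degrees live in an arbitrary monoid `Γ`: for a resolution with its homological
degree remembered, `Γ = ℕ × ℕ`. -/
lemma graded_lift {Γ ι κ : Type} [AddCommMonoid Γ] [Fintype κ]
    (δ : (σ →₀ ℕ) →+ Γ) (M : Matrix ι κ (MvPolynomial σ K)) (s' : ι → Γ) (s : κ → Γ)
    (hM : ∀ a b c, coeff c (M a b) ≠ 0 → δ c + s' a = s b) (Q : Γ → Prop)
    (w : κ → MvPolynomial σ K)
    (hz : ∀ a c, coeff c (M.mulVec w a) ≠ 0 → Q (δ c + s' a)) :
    ∃ w' : κ → MvPolynomial σ K, M.mulVec w' = M.mulVec w ∧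
      ∀ b c, coeff c (w' b) ≠ 0 → Q (δ c + s b) := by
  classical
  choose w' hw' using fun b => exists_coeff_filter (fun c => Q (δ c + s b)) (w b)
  have hite : ∀ {β : Type} (t : Finset β) (P : Prop) [Decidable P] (f : β → K),
      (if P then ∑ x ∈ t, f x else 0) = ∑ x ∈ t, if P then f x else 0 := by
    intro β t P _ f; split_ifs <;> simp
  refine ⟨w', ?_, fun b c h => ?_⟩
  · ext a e
    have key : coeff e (M.mulVec w' a) =
        if Q (δ e + s' a) then coeff e (M.mulVec w a) else 0 := by
      simp only [Matrix.mulVec, dotProduct, coeff_sum, coeff_mul]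
      rw [hite]
      refine Finset.sum_congr rfl fun b _ => ?_
      rw [hite]
      refine Finset.sum_congr rfl fun x hx => ?_
      rw [Finset.HasAntidiagonal.mem_antidiagonal] at hx
      by_cases h0 : coeff x.1 (M a b) = 0
      · simp [h0]
      · have h1 := hM a b x.1 h0
        have h2 : δ e + s' a = δ x.2 + s b := by
          rw [← h1, ← hx, map_add]; abel
        rw [hw', h2]
        split_ifs <;> simp
    rw [key]
    split_ifs with h
    · rfl
    · by_contra h'
      exact h (hz a e (fun h0 => h' h0.symm))
  · rw [hw'] at h
    by_contra h'
    simp [h'] at h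

end Lift

/-! ### Linear resolutions and their mapping cones -/

section Cone

variable {K : Type} [Field K] {n : ℕ}

/-- A finite free resolution of `I` that is linear with generators in degree `r`, with all its
basis elements collected in one type `ι`: the basis element `a` has homological degree `h a` and
internal degree `h a + r`. The differential is the square matrix `M` of linear forms and the
augmentation is the row `α`; `exact` expresses exactness of the augmented complex both at the free
modules and at `I`. -/
structure LinRes (K : Type) [Field K] {n : ℕ} (r : ℕ) (I : Ideal (MvPolynomial (Fin n) K)) where
  ι : Type
  [fin : Fintype ι]
  h : ι → ℕ
  M : Matrix ι ι (MvPolynomial (Fin n) K)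
  α : ι → MvPolynomial (Fin n) K
  hM : ∀ a b, M a b ≠ 0 → h b = h a + 1
  M_lin : ∀ a b c, coeff c (M a b) ≠ 0 → c.degree = 1
  hα : ∀ a, α a ≠ 0 → h a = 0
  α_deg : ∀ a c, coeff c (α a) ≠ 0 → c.degree = r
  α_mem : ∀ f, α ⬝ᵥ f ∈ I
  MM : ∀ f, M.mulVec (M.mulVec f) = 0
  αM : ∀ f, α ⬝ᵥ (M.mulVec f) = 0
  exact : ∀ y ∈ I, ∀ f, M.mulVec f = 0 → α ⬝ᵥ f = 0 → ∃ g, α ⬝ᵥ g = y ∧ M.mulVec g = f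

attribute [instance] LinRes.fin

variable {r : ℕ} {I J L : Ideal (MvPolynomial (Fin n) K)}

lemma LinRes.α_apply_mem (A : LinRes K r I) (a : A.ι) : A.α a ∈ I := by
  classical
  simpa using A.α_mem (Pi.single a 1)

/-- One column of the comparison map: for a basis element of homological degree `k` with prescribed
boundary `t`, there is a chain of degree `k` with linear coefficients having boundary `t`. -/
lemma LinRes.exists_column (B : LinRes K r L) (k : ℕ) (y : MvPolynomial (Fin n) K)
    (t : B.ι → MvPolynomial (Fin n) K) (hy : y ∈ L)
    (hyd : ∀ c, coeff c y ≠ 0 → c.degree = r + 1 ∧ k = 0)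
    (ht : B.M.mulVec t = 0) (ht' : B.α ⬝ᵥ t = 0)
    (htd : ∀ a c, coeff c (t a) ≠ 0 → c.degree = 2 ∧ B.h a + 1 = k) :
    ∃ w, B.α ⬝ᵥ w = y ∧ B.M.mulVec w = t ∧
      ∀ b c, coeff c (w b) ≠ 0 → c.degree = 1 ∧ B.h b = k := by
  obtain ⟨w, hw, hw'⟩ := B.exact y hy t ht ht'
  -- the augmentation and the differential, stacked into one matrix
  let N : Matrix (Option B.ι) B.ι (MvPolynomial (Fin n) K) := fun a => a.elim B.α B.M
  have hN : ∀ u a, N.mulVec u a = a.elim (B.α ⬝ᵥ u) (B.M.mulVec u) := by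
    rintro u (_ | a) <;> rfl
  let δ : (Fin n →₀ ℕ) →+ ℕ × ℕ := (AddMonoidHom.inl ℕ ℕ).comp Finsupp.degree
  have hδ : ∀ c, δ c = (c.degree, 0) := fun c => rfl
  obtain ⟨w', h1, h2⟩ := graded_lift δ N
    (fun a => a.elim (0, 0) fun a => (B.h a + r, B.h a + 1)) (fun b => (B.h b + r, B.h b))
    (by
      rintro (_ | a) b c hc
      · have := B.α_deg b c hc
        have := B.hα b (fun h => hc ((congrArg (coeff c) h).trans (coeff_zero c)))
        simp [hδ]; omega
      · have := B.M_lin a b c hc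
        have := B.hM a b (fun h => hc ((congrArg (coeff c) h).trans (coeff_zero c)))
        simp [hδ]; omega)
    (fun x => x = (r + 1 + k, k)) w
    (by
      rintro (_ | a) c hc
      · rw [hN] at hc
        have := hyd c (by simpa [hw] using hc)
        simp [hδ]; omega
      · rw [hN] at hc
        have := htd a c (by simpa [hw'] using hc)
        simp [hδ]; omega)
  refine ⟨w', ?_, ?_, fun b c hc => ?_⟩
  · have := congrFun h1 none
    simpa [hN, hw] using this
  · funext a
    have := congrFun h1 (some a)
    simpa [hN, hw'] using this
  · have := h2 b c hc
    simp [hδ] at this; omega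

/-- The inclusion `J ≤ L` lifts to a chain map between linear resolutions. As the generators of
`J` sit one degree above those of `L`, the entries of the lift are linear forms. -/
lemma LinRes.exists_comparison (A : LinRes K (r + 1) J) (B : LinRes K r L) (hJL : J ≤ L) :
    ∃ Φ : Matrix B.ι A.ι (MvPolynomial (Fin n) K),
      (∀ a b c, coeff c (Φ a b) ≠ 0 → c.degree = 1 ∧ B.h a = A.h b) ∧
      (∀ f, B.α ⬝ᵥ Φ.mulVec f = A.α ⬝ᵥ f) ∧
      (∀ f, B.M.mulVec (Φ.mulVec f) = Φ.mulVec (A.M.mulVec f)) := by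
  classical
  have key : ∀ k, ∃ φ : A.ι → B.ι → MvPolynomial (Fin n) K, ∀ b, A.h b < k →
      B.α ⬝ᵥ φ b = A.α b ∧ B.M.mulVec (φ b) = ∑ b', A.M b' b • φ b' ∧
      ∀ a c, coeff c (φ b a) ≠ 0 → c.degree = 1 ∧ B.h a = A.h b := by
    intro k
    induction k with
    | zero => exact ⟨0, fun b hb => absurd hb (by omega)⟩
    | succ k ih =>
      obtain ⟨φ, hφ⟩ := ih
      have hcol : ∀ b, ∃ w, A.h b = k → B.α ⬝ᵥ w = A.α b ∧
          B.M.mulVec w = (∑ b', A.M b' b • φ b') ∧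
          ∀ a c, coeff c (w a) ≠ 0 → c.degree = 1 ∧ B.h a = k := by
        intro b
        by_cases hb : A.h b = k
        swap
        · exact ⟨0, fun h => absurd h hb⟩
        have hAM : ∀ g, (∑ b', A.M b' b * g b') = g ⬝ᵥ A.M.mulVec (Pi.single b 1) := by
          intro g; simp [dotProduct, mul_comm]
        have hlt : ∀ b', A.M b' b ≠ 0 → A.h b' < k := by
          intro b' h; have := A.hM _ _ h; omega
        obtain ⟨w, h1, h2, h3⟩ := B.exists_column k (A.α b) (∑ b', A.M b' b • φ b')
          (hJL (A.α_apply_mem b))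
          (fun c hc => ⟨A.α_deg b c hc, by
            rw [← hb]; exact A.hα b (by rintro h; simp [h] at hc)⟩)
          (by
            have : B.M.mulVec (∑ b', A.M b' b • φ b') =
                ∑ b', A.M b' b • ∑ b'', A.M b'' b' • φ b'' := by
              rw [← Matrix.mulVecLin_apply, map_sum]
              refine Finset.sum_congr rfl fun b' _ => ?_
              rw [map_smul, Matrix.mulVecLin_apply]
              by_cases h0 : A.M b' b = 0
              · simp [h0]
              · rw [(hφ b' (hlt b' h0)).2.1]
            rw [this]
            simp only [Finset.smul_sum, smul_smul]
            rw [Finset.sum_comm]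
            refine Finset.sum_eq_zero fun b'' _ => ?_
            rw [← Finset.sum_smul]
            have h0 := congrFun (A.MM (Pi.single b 1)) b''
            have : ∑ b', A.M b' b * A.M b'' b' = 0 := by
              rw [hAM]; simpa [Matrix.mulVec, dotProduct] using h0
            rw [this, zero_smul])
          (by
            rw [dotProduct_sum]
            rw [← A.αM (Pi.single b 1), ← hAM]
            refine Finset.sum_congr rfl fun b' _ => ?_
            rw [dotProduct_smul, smul_eq_mul]
            by_cases h0 : A.M b' b = 0
            · simp [h0]
            · rw [(hφ b' (hlt b' h0)).1])
          (by
            intro a c hc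
            rw [Finset.sum_apply, coeff_sum] at hc
            obtain ⟨b', -, hb'⟩ := Finset.exists_ne_zero_of_sum_ne_zero hc
            rw [Pi.smul_apply, smul_eq_mul, coeff_mul] at hb'
            obtain ⟨x, hx, hx'⟩ := Finset.exists_ne_zero_of_sum_ne_zero hb'
            rw [Finset.HasAntidiagonal.mem_antidiagonal] at hx
            have h0 : A.M b' b ≠ 0 := by rintro h; simp [h] at hx'
            have e1 := A.M_lin _ _ _ (left_ne_zero_of_mul hx')
            have e2 := (hφ b' (hlt b' h0)).2.2 a _ (right_ne_zero_of_mul hx')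
            have e3 := A.hM _ _ h0
            rw [← hx, map_add]
            omega)
        exact ⟨w, fun _ => ⟨h1, h2, h3⟩⟩
      choose w hw using hcol
      refine ⟨fun b => if A.h b = k then w b else φ b, fun b hb => ?_⟩
      have hsum : ∑ b', A.M b' b • (if A.h b' = k then w b' else φ b') =
          ∑ b', A.M b' b • φ b' := by
        refine Finset.sum_congr rfl fun b' _ => ?_
        by_cases h0 : A.M b' b = 0
        · simp [h0]
        · have := A.hM _ _ h0
          rw [if_neg (by omega)]
      rw [hsum]
      by_cases hbk : A.h b = k
      · simp only [hbk, if_true]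
        exact hw b hbk
      · simp only [hbk, if_false]
        exact hφ b (by omega)
  obtain ⟨φ, hφ⟩ := key (Finset.univ.sup A.h + 1)
  replace hφ := fun b => hφ b (Nat.lt_succ_of_le (Finset.le_sup (f := A.h) (Finset.mem_univ b)))
  have hΦ : ∀ f, (Matrix.of fun a b => φ b a).mulVec f = ∑ b, f b • φ b := by
    intro f; funext a; simp [Matrix.mulVec, dotProduct, mul_comm]
  refine ⟨Matrix.of fun a b => φ b a, fun a b c hc => (hφ b).2.2 a c hc, fun f => ?_, fun f => ?_⟩
  · rw [hΦ, dotProduct_sum]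
    refine Finset.sum_congr rfl fun b _ => ?_
    rw [dotProduct_smul, (hφ b).1, smul_eq_mul, mul_comm]
  · rw [hΦ, hΦ, ← Matrix.mulVecLin_apply, map_sum]
    simp only [map_smul, Matrix.mulVecLin_apply, (hφ _).2.1, Finset.smul_sum, smul_smul]
    rw [Finset.sum_comm]
    refine Finset.sum_congr rfl fun b' _ => ?_
    simp only [Matrix.mulVec, dotProduct, Finset.sum_smul]
    exact Finset.sum_congr rfl fun b _ => by rw [mul_comm]

/-- Let `J ≤ L` have linear resolutions generated in degrees `r + 1` and `r`, and let `x_v` be a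
nonzerodivisor modulo `J`. The exact sequence `0 → J(-1) → J ⊕ L(-1) → J + x_v L → 0` has maps
`y ↦ (x_v y, -y)` and `(y, z) ↦ y + x_v z`; the mapping cone of a lift of the first one is a linear
resolution of `J + x_v L`. -/
lemma LinRes.cone (A : LinRes K (r + 1) J) (B : LinRes K r L) (hJL : J ≤ L) (v : Fin n)
    (hv : ∀ y, X v * y ∈ J → y ∈ J) :
    Nonempty (LinRes K (r + 1) (J ⊔ Ideal.span {X v} * L)) := by
  classical
  obtain ⟨Φ, hΦd, hΦα, hΦM⟩ := A.exists_comparison B hJL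
  let D : Matrix (A.ι ⊕ B.ι ⊕ A.ι) (A.ι ⊕ B.ι ⊕ A.ι) (MvPolynomial (Fin n) K) := fun a b =>
    match a, b with
    | .inl a, .inl b => A.M a b
    | .inl _, .inr (.inl _) => 0
    | .inl a, .inr (.inr b) => if a = b then X v else 0
    | .inr (.inl _), .inl _ => 0
    | .inr (.inl a), .inr (.inl b) => B.M a b
    | .inr (.inl a), .inr (.inr b) => - Φ a b
    | .inr (.inr _), .inl _ => 0
    | .inr (.inr _), .inr (.inl _) => 0
    | .inr (.inr a), .inr (.inr b) => - A.M a b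
  let β : A.ι ⊕ B.ι ⊕ A.ι → MvPolynomial (Fin n) K :=
    Sum.elim A.α (Sum.elim (fun b => X v * B.α b) 0)
  let h' : A.ι ⊕ B.ι ⊕ A.ι → ℕ := Sum.elim A.h (Sum.elim B.h fun b => A.h b + 1)
  have hD : ∀ f g t, D.mulVec (Sum.elim f (Sum.elim g t)) =
      Sum.elim (A.M.mulVec f + (X v : MvPolynomial (Fin n) K) • t)
        (Sum.elim (B.M.mulVec g - Φ.mulVec t) (-(A.M.mulVec t))) := by
    intro f g t
    funext a
    rcases a with a | a | a <;>
      simp [D, Matrix.mulVec, dotProduct, Fintype.sum_sum_type, sub_eq_add_neg]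
  have hβ : ∀ f g t, β ⬝ᵥ (Sum.elim f (Sum.elim g t)) = A.α ⬝ᵥ f + X v * (B.α ⬝ᵥ g) := by
    intro f g t
    simp [β, dotProduct, Fintype.sum_sum_type, Finset.mul_sum, mul_assoc]
  have hsplit : ∀ F : A.ι ⊕ B.ι ⊕ A.ι → MvPolynomial (Fin n) K,
      ∃ f g t, F = Sum.elim f (Sum.elim g t) := fun F =>
    ⟨fun a => F (.inl a), fun a => F (.inr (.inl a)), fun a => F (.inr (.inr a)), by
      funext a; rcases a with a | a | a <;> rfl⟩
  have hXdeg : ∀ c, coeff c (X v : MvPolynomial (Fin n) K) ≠ 0 → c.degree = 1 := by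
    intro c hc
    rw [coeff_X] at hc
    have : Finsupp.single v 1 = c := by by_contra h; simp [h] at hc
    simp [← this]
  refine ⟨⟨_, h', D, β, ?_, ?_, ?_, ?_, ?_, ?_, ?_, ?_⟩⟩
  · rintro (a | a | a) (b | b | b) hab <;> simp only [D, h', Sum.elim_inl, Sum.elim_inr] at hab ⊢
    · exact A.hM a b hab
    · exact absurd rfl hab
    · by_cases h : a = b
      · rw [h]
      · simp [h] at hab
    · exact absurd rfl hab
    · exact B.hM a b hab
    · obtain ⟨c, hc⟩ := MvPolynomial.ne_zero_iff.1 (neg_ne_zero.1 hab)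
      rw [(hΦd a b c hc).2]
    · exact absurd rfl hab
    · exact absurd rfl hab
    · rw [A.hM a b (neg_ne_zero.1 hab)]
  · rintro (a | a | a) (b | b | b) c hc <;> simp only [D] at hc
    · exact A.M_lin a b c hc
    · simp at hc
    · split_ifs at hc
      · exact hXdeg c hc
      · simp at hc
    · simp at hc
    · exact B.M_lin a b c hc
    · exact (hΦd a b c (by simpa using hc)).1
    · simp at hc
    · simp at hc
    · exact A.M_lin a b c (by simpa using hc)
  · rintro (a | a | a) ha <;> simp only [β, h', Sum.elim_inl, Sum.elim_inr] at ha ⊢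
    · exact A.hα a ha
    · exact B.hα a (right_ne_zero_of_mul ha)
    · exact absurd rfl ha
  · rintro (a | a | a) c hc <;> simp only [β, Sum.elim_inl, Sum.elim_inr] at hc
    · exact A.α_deg a c hc
    · rw [coeff_mul] at hc
      obtain ⟨x, hx, hx'⟩ := Finset.exists_ne_zero_of_sum_ne_zero hc
      rw [Finset.HasAntidiagonal.mem_antidiagonal] at hx
      rw [← hx, map_add, hXdeg _ (left_ne_zero_of_mul hx'),
        B.α_deg a _ (right_ne_zero_of_mul hx'), add_comm]
    · simp at hc
  · intro F
    obtain ⟨f, g, t, rfl⟩ := hsplit F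
    rw [hβ]
    exact Submodule.add_mem_sup (A.α_mem f)
      (Ideal.mem_span_singleton_mul.2 ⟨_, B.α_mem g, rfl⟩)
  · intro F
    obtain ⟨f, g, t, rfl⟩ := hsplit F
    rw [hD, hD]
    funext a
    rcases a with a | a | a <;>
      simp [Matrix.mulVec_add, Matrix.mulVec_sub, Matrix.mulVec_neg, Matrix.mulVec_smul, A.MM,
        B.MM, hΦM]
  · intro F
    obtain ⟨f, g, t, rfl⟩ := hsplit F
    rw [hD, hβ, dotProduct_add, dotProduct_sub, A.αM, B.αM, hΦα, dotProduct_smul, smul_eq_mul]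
    ring
  · intro y hy F hF hF'
    obtain ⟨f, g, t, rfl⟩ := hsplit F
    rw [hD] at hF
    rw [hβ] at hF'
    have e1 : A.M.mulVec f + (X v : MvPolynomial (Fin n) K) • t = 0 := by
      funext a; simpa using congrFun hF (.inl a)
    have e2 : B.M.mulVec g - Φ.mulVec t = 0 := by
      funext a; simpa using congrFun hF (.inr (.inl a))
    have e3 : A.M.mulVec t = 0 := by
      funext a; simpa using congrFun hF (.inr (.inr a))
    have hX : (X v : MvPolynomial (Fin n) K) ≠ 0 := X_ne_zero v
    have e4 : A.α ⬝ᵥ t = 0 := by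
      have := congrArg (A.α ⬝ᵥ ·) e1
      simp only [dotProduct_add, A.αM, dotProduct_smul, smul_eq_mul, dotProduct_zero,
        zero_add] at this
      exact (mul_eq_zero.1 this).resolve_left hX
    obtain ⟨u, -, hu⟩ := A.exact 0 J.zero_mem t e3 e4
    -- subtracting the boundary of `(0, 0, -u)` makes the last coordinate vanish
    have e5 : B.α ⬝ᵥ (g - Φ.mulVec u) ∈ J := by
      refine hv _ ?_
      have : X v * (B.α ⬝ᵥ (g - Φ.mulVec u)) = - (A.α ⬝ᵥ (f + (X v : MvPolynomial _ K) • u)) := by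
        rw [dotProduct_sub, hΦα, dotProduct_add, dotProduct_smul, smul_eq_mul]
        linear_combination hF'
      rw [this]
      exact J.neg_mem (A.α_mem _)
    obtain ⟨w, hw, hw'⟩ := A.exact _ e5 0 (Matrix.mulVec_zero _) (dotProduct_zero _)
    obtain ⟨j, hj, l', hl', rfl⟩ := Submodule.mem_sup.1 hy
    obtain ⟨l, hl, rfl⟩ := Ideal.mem_span_singleton_mul.1 hl'
    obtain ⟨f', hf1, hf2⟩ := A.exact j hj
        (f + (X v : MvPolynomial (Fin n) K) • u + (X v : MvPolynomial (Fin n) K) • w)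
      (by rw [Matrix.mulVec_add, Matrix.mulVec_add, Matrix.mulVec_smul, Matrix.mulVec_smul, hu,
          hw', e1]; simp)
      (by
        rw [dotProduct_add, dotProduct_add, dotProduct_smul, dotProduct_smul, hw, dotProduct_sub,
          hΦα, smul_eq_mul, smul_eq_mul]
        linear_combination hF')
    obtain ⟨g', hg1, hg2⟩ := B.exact l hl (g - Φ.mulVec u - Φ.mulVec w)
      (by rw [Matrix.mulVec_sub, Matrix.mulVec_sub, hΦM, hΦM, hu, hw', e2]; simp)
      (by rw [dotProduct_sub, hΦα, hw, sub_self])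
    refine ⟨Sum.elim f' (Sum.elim g' (-u - w)), by rw [hβ, hf1, hg1], ?_⟩
    rw [hD, hf2, hg2]
    congr 1
    · rw [smul_sub, smul_neg]; abel
    · congr 1
      · rw [Matrix.mulVec_sub, Matrix.mulVec_neg]; abel
      · rw [Matrix.mulVec_sub, Matrix.mulVec_neg, hu, hw']; abel

lemma LinRes.bot (r : ℕ) : Nonempty (LinRes K r (⊥ : Ideal (MvPolynomial (Fin n) K))) :=
  ⟨⟨PEmpty, fun _ => 0, 0, 0, fun a => a.elim, fun a => a.elim, fun a => a.elim, fun a => a.elim,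
    fun f => by simp [dotProduct], fun f => by simp, fun f => by simp, fun y hy f _ _ =>
      ⟨0, by simpa using ((Submodule.mem_bot _).1 hy).symm, by funext a; exact a.elim⟩⟩⟩

lemma LinRes.top : Nonempty (LinRes K 0 (⊤ : Ideal (MvPolynomial (Fin n) K))) :=
  ⟨⟨Unit, fun _ => 0, 0, 1, by simp, by simp, by simp, by
      intro a c hc
      rw [Pi.one_apply, coeff_one] at hc
      have : 0 = c := by by_contra h; simp [h] at hc
      simp [← this], by simp, by simp, by simp, fun y _ f _ hf =>
      ⟨fun _ => y, by simp [dotProduct], by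
        funext a
        have : f a = 0 := by simpa [dotProduct] using hf
        simp [this]⟩⟩⟩

/-- Sorting the basis of a linear resolution by homological degree gives a graded free resolution
in the sense of `GradedFreeRes`, with all shifts in step `i` equal to `i + r`. -/
lemma LinRes.toGradedFreeRes (A : LinRes K r I) :
    ∃ F : GradedFreeRes K I, ∀ i a, F.shift i a = i + r := by
  classical
  let e : ∀ i, {a // A.h a = i} ≃ Fin (Fintype.card {a // A.h a = i}) :=
    fun i => Fintype.equivFin _
  -- extension by zero of a vector supported in homological degree `i`
  let ext : ∀ i, (Fin (Fintype.card {a // A.h a = i}) → MvPolynomial (Fin n) K) →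
      A.ι → MvPolynomial (Fin n) K :=
    fun i f a => if ha : A.h a = i then f (e i ⟨a, ha⟩) else 0
  have hext : ∀ i f b, ext i f ((e i).symm b) = f b := by
    intro i f b
    simp only [ext]
    rw [dif_pos ((e i).symm b).2]
    simp
  have hsum : ∀ i f (g : A.ι → MvPolynomial (Fin n) K),
      ∑ b, g ((e i).symm b) * f b = g ⬝ᵥ ext i f := by
    intro i f g
    rw [← (e i).sum_comp, dotProduct]
    simp only [ext, mul_dite, mul_zero, Equiv.symm_apply_apply]
    rw [Finset.sum_dite]
    simp only [Finset.sum_const_zero, add_zero]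
    rw [Finset.sum_coe_sort_eq_attach]
    symm
    refine Finset.sum_bij' (fun x _ => ⟨x.1, (Finset.mem_filter.1 x.2).2⟩)
      (fun x _ => ⟨x.1, by simp [x.2]⟩) ?_ ?_ ?_ ?_ ?_ <;> simp
  let N : ∀ i, Matrix (Fin (Fintype.card {a // A.h a = i}))
      (Fin (Fintype.card {a // A.h a = i + 1})) (MvPolynomial (Fin n) K) :=
    fun i a b => A.M ((e i).symm a) ((e (i + 1)).symm b)
  have hN : ∀ i f a, (N i).mulVec f a = A.M.mulVec (ext (i + 1) f) ((e i).symm a) :=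
    fun i f a => hsum (i + 1) f (A.M ((e i).symm a))
  have hMext : ∀ i f a, A.h a ≠ i → A.M.mulVec (ext (i + 1) f) a = 0 := by
    intro i f a ha
    refine Finset.sum_eq_zero fun b _ => ?_
    by_cases h0 : A.M a b = 0
    · simp [h0]
    · have := A.hM a b h0
      have : ext (i + 1) f b = 0 := dif_neg (by omega)
      rw [this, mul_zero]
  have hMext0 : ∀ f, A.M.mulVec (ext 0 f) = 0 := by
    intro f
    funext a
    refine Finset.sum_eq_zero fun b _ => ?_
    by_cases h0 : A.M a b = 0
    · simp [h0]
    · have := A.hM a b h0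
      have : ext 0 f b = 0 := dif_neg (by omega)
      rw [this, mul_zero]
  have hαext : ∀ i f, A.α ⬝ᵥ ext (i + 1) f = 0 := by
    intro i f
    refine Finset.sum_eq_zero fun b _ => ?_
    by_cases h0 : A.α b = 0
    · simp [h0]
    · have := A.hα b h0
      have : ext (i + 1) f b = 0 := dif_neg (by omega)
      rw [this, mul_zero]
  have hNext : ∀ i f, ext i ((N i).mulVec f) = A.M.mulVec (ext (i + 1) f) := by
    intro i f
    funext a
    by_cases ha : A.h a = i
    · simp only [ext]
      rw [dif_pos ha]
      rw [hN]; simp [ext]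
    · rw [hMext i f a ha]; exact dif_neg ha
  have hext_inj : ∀ i f g, ext i f = ext i g → f = g := by
    intro i f g h
    funext b
    rw [← hext i f, h, hext]
  -- a boundary concentrated in degree `i` comes from a chain of degree `i + 1`
  have hcut : ∀ i f g, A.M.mulVec g = ext i f → ∃ g', (N i).mulVec g' = f := by
    intro i f g h
    refine ⟨fun b => g ((e (i + 1)).symm b), ?_⟩
    funext a
    rw [hN, ← hext i f, ← h]
    refine Finset.sum_congr rfl fun b _ => ?_
    by_cases h0 : A.M ((e i).symm a) b = 0
    · simp [h0]
    · have := A.hM _ b h0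
      have ha := ((e i).symm a).2
      have : ext (i + 1) (fun b => g ((e (i + 1)).symm b)) b = g b := by
        simp only [ext]
        rw [dif_pos (by omega)]; simp
      rw [this]
  have hlin : ∀ (p : MvPolynomial (Fin n) K) d, (∀ c, coeff c p ≠ 0 → c.degree = d) →
      p.IsHomogeneous d := by
    intro p d h c hc
    rw [← h c hc, Finsupp.degree_eq_weight_one]; rfl
  let aug : (Fin (Fintype.card {a // A.h a = 0}) → MvPolynomial (Fin n) K)
      →ₗ[MvPolynomial (Fin n) K] MvPolynomial (Fin n) K :=
    dotProductBilin (MvPolynomial (Fin n) K) (MvPolynomial (Fin n) K) (fun b => A.α ((e 0).symm b))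
  have haug : ∀ f, aug f = A.α ⬝ᵥ ext 0 f := fun f => hsum 0 f A.α
  refine ⟨{
    len := Finset.univ.sup A.h
    rank := fun i => Fintype.card {a // A.h a = i}
    rank_zero := ?_
    shift := fun i _ => i + r
    d := fun i => (N i).mulVecLin
    aug := aug
    aug_range := ?_
    exact_zero := ?_
    exact_succ := ?_
    homog_aug := ?_
    homog_d := ?_ }, fun i a => rfl⟩
  · intro i hi
    rw [Fintype.card_eq_zero_iff]
    refine ⟨fun a => ?_⟩
    have := Finset.le_sup (f := A.h) (Finset.mem_univ a.1)
    have := a.2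
    omega
  · ext y
    rw [LinearMap.mem_range]
    constructor
    · rintro ⟨f, rfl⟩
      rw [haug]; exact A.α_mem _
    · intro hy
      obtain ⟨g, hg, -⟩ := A.exact y hy 0 (Matrix.mulVec_zero _) (dotProduct_zero _)
      refine ⟨fun b => g ((e 0).symm b), ?_⟩
      rw [haug, ← hg]
      refine Finset.sum_congr rfl fun b _ => ?_
      by_cases h0 : A.α b = 0
      · simp [h0]
      · have := A.hα b h0
        have : ext 0 (fun b => g ((e 0).symm b)) b = g b := by
          simp only [ext]
          rw [dif_pos (by omega)]; simp
        rw [this]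
  · ext f
    rw [LinearMap.mem_ker, LinearMap.mem_range, haug]
    constructor
    · intro hf
      obtain ⟨g, -, hg⟩ := A.exact 0 I.zero_mem (ext 0 f) (hMext0 f) hf
      exact hcut 0 f g hg
    · rintro ⟨g, rfl⟩
      rw [Matrix.mulVecLin_apply, hNext, A.αM]
  · intro i
    ext f
    rw [LinearMap.mem_ker, LinearMap.mem_range, Matrix.mulVecLin_apply]
    constructor
    · intro hf
      obtain ⟨g, -, hg⟩ := A.exact 0 I.zero_mem (ext (i + 1) f)
        (by rw [← hNext, hf]; funext a; simp [ext]) (hαext i f)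
      exact hcut (i + 1) f g hg
    · rintro ⟨g, rfl⟩
      apply hext_inj
      rw [Matrix.mulVecLin_apply, hNext, hNext, A.MM]
      funext a; simp [ext]
  · intro a
    rw [zero_add]
    apply hlin
    intro c hc
    have : aug (Pi.single a 1) = A.α ((e 0).symm a) := by simp [aug]
    exact A.α_deg _ c (by rwa [this] at hc)
  · intro i b a
    refine Or.inr ⟨1, by omega, ?_⟩
    apply hlin
    intro c hc
    refine A.M_lin ((e i).symm a) ((e (i + 1)).symm b) c ?_
    have : (N i).mulVecLin (Pi.single b 1) a = N i a b := by
      rw [Matrix.mulVecLin_apply]; simp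
    rwa [this] at hc

end Cone
/-! ### Simplicial vertices of chordal graphs -/

section Dirac

open SimpleGraph

variable {V : Type} [DecidableEq V] {H : SimpleGraph V}

/-- A shortest walk inside `A ∪ {x, y}` between nonadjacent vertices `x`, `y`, closed up through a
vertex `b` adjacent to `x` and `y` but to nothing in `A`, is a chordless cycle of length at least
`4`. -/
lemma not_chordal_of_walk (A : Finset V) {x y b : V} (hxy : x ≠ y) (hnxy : ¬ H.Adj x y)
    (hbx : H.Adj b x) (hby : H.Adj b y) (hbA : b ∉ A) (hb : ∀ a ∈ A, ¬ H.Adj a b)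
    (hw : ∃ w : H.Walk x y, ∀ z ∈ w.support, z ∈ insert x (insert y A)) : ¬ Chordal H := by
  intro hH
  have hex : ∃ k, ∃ w : H.Walk x y, w.length = k ∧ ∀ z ∈ w.support, z ∈ insert x (insert y A) := by
    obtain ⟨w, hw⟩ := hw
    exact ⟨_, w, rfl, hw⟩
  classical
  obtain ⟨p, hpl, hpA⟩ := Nat.find_spec hex
  have hmin : ∀ w : H.Walk x y, (∀ z ∈ w.support, z ∈ p.support) → p.length ≤ w.length := by
    intro w hw
    rw [hpl]
    exact Nat.find_min' hex ⟨w, rfl, fun z hz => hpA z (hw z hz)⟩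
  have hpath : p.IsPath := by
    have := Walk.bypass_eq_self_of_length_le_length_bypass p (hmin _ (Walk.support_bypass_subset_support p))
    rw [← this]; exact Walk.bypass_isPath p
  have hl : 2 ≤ p.length := by
    by_contra h
    have : p.length = 0 ∨ p.length = 1 := by omega
    rcases this with h | h
    · exact hxy (Walk.eq_of_length_eq_zero h)
    · exact hnxy (Walk.adj_of_length_eq_one h)
  have hbp : b ∉ p.support := by
    intro h
    have := hpA b h
    rw [Finset.mem_insert, Finset.mem_insert] at this
    rcases this with h | h | h
    · exact hbx.ne h
    · exact hby.ne h
    · exact hbA h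
  -- a chord of `p` would give a shorter walk
  have hchord : ∀ i j, i < j → j ≤ p.length → H.Adj (p.getVert i) (p.getVert j) →
      s(p.getVert i, p.getVert j) ∈ p.edges := by
    intro i j hij hj hadj
    by_cases h : j = i + 1
    · subst h
      exact (Walk.mk_mem_edges_iff_exists p).2 ⟨i, by omega, rfl⟩
    · exfalso
      have := hmin ((p.take i).append (Walk.cons hadj (p.drop j))) (by
        intro z hz
        rw [Walk.mem_support_append_iff, Walk.support_cons, List.mem_cons] at hz
        rcases hz with hz | hz | hz
        · exact (p.isSubwalk_take i).support_subset hz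
        · rw [hz]; exact p.getVert_mem_support i
        · exact (p.isSubwalk_drop j).support_subset hz)
      rw [Walk.length_append, Walk.length_cons, Walk.take_length, Walk.drop_length] at this
      omega
  have hcyc : (Walk.cons hbx (p.concat hby.symm)).IsCycle := by
    rw [Walk.cons_isCycle_iff]
    refine ⟨hpath.concat hbp hby.symm, ?_⟩
    rw [Walk.edges_concat, List.concat_eq_append, List.mem_append, List.mem_singleton]
    rintro (h | h)
    · exact hbp (p.fst_mem_support_of_mem_edges h)
    · rw [Sym2.eq_iff] at h
      rcases h with h | h
      · exact hby.ne h.1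
      · exact hxy h.2
  obtain ⟨c, d, hc, hd, hcd, hne⟩ := hH b _ hcyc (by simp; omega)
  simp only [Walk.edges_cons, Walk.edges_concat, List.concat_eq_append, List.mem_cons,
    List.mem_append, List.not_mem_nil, or_false, not_or] at hne
  obtain ⟨hne1, hne2, hne3⟩ := hne
  simp only [Walk.support_cons, Walk.support_concat, List.mem_cons,
    List.mem_append, List.not_mem_nil, or_false] at hc hd
  have hbd : ∀ d, d ∈ p.support → H.Adj b d → d = x ∨ d = y := by
    intro d hd hbd
    have := hpA d hd
    rw [Finset.mem_insert, Finset.mem_insert] at this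
    rcases this with h | h | h
    · exact Or.inl h
    · exact Or.inr h
    · exact absurd hbd.symm (hb d h)
  by_cases hcb : c = b
  · subst hcb
    have hd' : d ∈ p.support := by
      have := hcd.ne'
      tauto
    rcases hbd d hd' hcd with rfl | rfl
    · exact hne1 rfl
    · exact hne3 Sym2.eq_swap
  by_cases hdb : d = b
  · subst hdb
    have hc' : c ∈ p.support := by tauto
    rcases hbd c hc' hcd.symm with rfl | rfl
    · exact hne1 Sym2.eq_swap
    · exact hne3 rfl
  have hc' : c ∈ p.support := by tauto
  have hd' : d ∈ p.support := by tauto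
  obtain ⟨i, rfl, hi⟩ := Walk.mem_support_iff_exists_getVert.1 hc'
  obtain ⟨j, rfl, hj⟩ := Walk.mem_support_iff_exists_getVert.1 hd'
  rcases lt_trichotomy i j with h | h | h
  · exact hne2 (hchord i j h hj hcd)
  · subst h; exact hcd.ne rfl
  · rw [Sym2.eq_swap] at hne2
    exact hne2 (hchord j i h hi hcd.symm)

/-- Dirac's theorem: every nonempty induced subgraph of a chordal graph has a simplicial vertex.
If the subgraph is not complete, take a maximal connected set `A` such that the set `B` of vertices
outside `A` and not adjacent to `A` is nonempty. By maximality the remaining vertices are adjacent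
to all of `B`, and by chordality they form a clique, so a simplicial vertex of `B` is simplicial. -/
lemma exists_simplicial (hH : Chordal H) (W : Finset V) (hW : W.Nonempty) :
    ∃ v ∈ W, ∀ a ∈ W, ∀ b ∈ W, H.Adj v a → H.Adj v b → a ≠ b → H.Adj a b := by
  classical
  induction W using Finset.strongInduction with
  | H W ih =>
  by_cases hcomp : ∀ a ∈ W, ∀ b ∈ W, a ≠ b → H.Adj a b
  · obtain ⟨v, hv⟩ := hW
    exact ⟨v, hv, fun a ha b hb _ _ hab => hcomp a ha b hb hab⟩
  push Not at hcomp
  obtain ⟨u, hu, t, ht, hut, hnut⟩ := hcomp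
  let P : Finset V → Prop := fun A => u ∈ A ∧
    (∀ p ∈ A, ∃ w : H.Walk u p, ∀ z ∈ w.support, z ∈ A) ∧
    ∃ b ∈ W, b ∉ A ∧ ∀ a ∈ A, ¬ H.Adj a b
  obtain ⟨A, hA, hmax⟩ := Finset.exists_max_image (W.powerset.filter P) Finset.card
    ⟨{u}, by
      rw [Finset.mem_filter]
      refine ⟨by simpa using hu, by simp, ?_, t, ht, by simpa using hut.symm, by simpa using hnut⟩
      intro p hp
      rw [Finset.mem_singleton] at hp
      subst hp
      exact ⟨Walk.nil, by simp⟩⟩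
  rw [Finset.mem_filter, Finset.mem_powerset] at hA
  obtain ⟨hAW, huA, hconn, t', ht', ht'A, ht'adj⟩ := hA
  let B := W.filter fun b => b ∉ A ∧ ∀ a ∈ A, ¬ H.Adj a b
  have hB : ∀ b, b ∈ B ↔ b ∈ W ∧ b ∉ A ∧ ∀ a ∈ A, ¬ H.Adj a b := fun b => Finset.mem_filter
  obtain ⟨v, hvB, hv⟩ := ih B
    ((Finset.ssubset_iff_of_subset (Finset.filter_subset _ _)).2
      ⟨u, hu, fun h => ((hB u).1 h).2.1 huA⟩) ⟨t', (hB t').2 ⟨ht', ht'A, ht'adj⟩⟩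
  have hN : ∀ x ∈ W, x ∉ A → x ∉ B → ∃ a ∈ A, H.Adj a x := by
    intro x hx hxA hxB
    by_contra h
    push Not at h
    exact hxB ((hB x).2 ⟨hx, hxA, h⟩)
  have hNB : ∀ x ∈ W, x ∉ A → x ∉ B → ∀ b ∈ B, H.Adj x b := by
    intro x hx hxA hxB b hbB
    obtain ⟨hb, hbA, hbadj⟩ := (hB b).1 hbB
    by_contra hxb
    obtain ⟨a, ha, hax⟩ := hN x hx hxA hxB
    have hmem : insert x A ∈ W.powerset.filter P := by
      rw [Finset.mem_filter, Finset.mem_powerset]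
      refine ⟨Finset.insert_subset hx hAW, Finset.mem_insert_of_mem huA, ?_, b, hb, ?_, ?_⟩
      · intro p hp
        rw [Finset.mem_insert] at hp
        rcases hp with rfl | hp
        · obtain ⟨w, hw⟩ := hconn a ha
          refine ⟨w.concat hax, fun z hz => ?_⟩
          rw [Walk.support_concat, List.mem_append,
            List.mem_singleton] at hz
          rw [Finset.mem_insert]
          exact hz.symm.imp_right (hw z)
        · obtain ⟨w, hw⟩ := hconn p hp
          exact ⟨w, fun z hz => Finset.mem_insert_of_mem (hw z hz)⟩
      · rw [Finset.mem_insert]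
        rintro (rfl | h)
        · exact hxB hbB
        · exact hbA h
      · intro a' ha'
        rw [Finset.mem_insert] at ha'
        rcases ha' with rfl | h
        · exact hxb
        · exact hbadj a' h
    have := hmax _ hmem
    rw [Finset.card_insert_of_notMem hxA] at this
    omega
  obtain ⟨hvW, hvA, hvadj⟩ := (hB v).1 hvB
  refine ⟨v, hvW, fun a ha b hb hva hvb hab => ?_⟩
  have haA : a ∉ A := fun h => hvadj a h hva.symm
  have hbA : b ∉ A := fun h => hvadj b h hvb.symm
  by_cases haB : a ∈ B
  · by_cases hbB : b ∈ B
    · exact hv a haB b hbB hva hvb hab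
    · exact (hNB b hb hbA hbB a haB).symm
  · by_cases hbB : b ∈ B
    · exact hNB a ha haA haB b hbB
    · by_contra hnab
      obtain ⟨a', ha', haa⟩ := hN a ha haA haB
      obtain ⟨b', hb', hbb⟩ := hN b hb hbA hbB
      obtain ⟨w₁, hw₁⟩ := hconn a' ha'
      obtain ⟨w₂, hw₂⟩ := hconn b' hb'
      refine not_chordal_of_walk A hab hnab hva hvb hvA hvadj
        ⟨Walk.cons haa.symm ((w₁.reverse.append w₂).concat hbb), fun z hz => ?_⟩ hH
      rw [Walk.support_cons, Walk.support_concat, List.mem_cons,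
        List.mem_append, Walk.mem_support_append_iff, Walk.support_reverse, List.mem_reverse,
        List.mem_singleton] at hz
      rw [Finset.mem_insert, Finset.mem_insert]
      rcases hz with hz | (hz | hz) | hz
      · exact Or.inl hz
      · exact Or.inr (Or.inr (hw₁ z hz))
      · exact Or.inr (Or.inr (hw₂ z hz))
      · exact Or.inr (Or.inl hz)

end Dirac
/-! ### Co-chordal graphs have linear resolutions -/

section Cochordal

variable {K : Type} [Field K] {n : ℕ}

/-- An ideal generated by monomials that do not involve `x_v` has `x_v` as a nonzerodivisor on its
quotient. -/
lemma mem_of_X_mul_mem {s : Set (Fin n →₀ ℕ)} {v : Fin n} (hs : ∀ e ∈ s, e v = 0)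
    (y : MvPolynomial (Fin n) K)
    (hy : X v * y ∈ Ideal.span ((fun e => monomial e (1 : K)) '' s)) :
    y ∈ Ideal.span ((fun e => monomial e (1 : K)) '' s) := by
  rw [mem_ideal_span_monomial_image] at hy ⊢
  intro c hc
  obtain ⟨e, he, hle⟩ := hy (Finsupp.single v 1 + c) (by
    rw [mem_support_iff] at hc ⊢
    rwa [coeff_X_mul])
  refine ⟨e, he, fun i => ?_⟩
  by_cases hi : i = v
  · subst hi; rw [hs e he]; exact Nat.zero_le _
  · have := hle i
    rwa [Finsupp.add_apply, Finsupp.single_eq_of_ne hi, zero_add] at this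

lemma linRes_span_X (N : Finset (Fin n)) :
    Nonempty (LinRes K 1 (Ideal.span ((X : Fin n → MvPolynomial (Fin n) K) '' N))) := by
  classical
  induction N using Finset.induction_on with
  | empty => simpa using LinRes.bot (K := K) (n := n) 1
  | insert v N hv ih =>
    obtain ⟨A⟩ := ih
    obtain ⟨B⟩ := LinRes.top (K := K) (n := n)
    have himg : (X : Fin n → MvPolynomial (Fin n) K) '' N = (fun e => monomial e (1 : K)) ''
        ((fun i => Finsupp.single i 1) '' (N : Set (Fin n))) := by
      rw [Set.image_image]; rfl
    have := A.cone B le_top v (fun y hy => by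
      rw [himg] at hy ⊢
      refine mem_of_X_mul_mem ?_ y hy
      rintro _ ⟨i, hi, rfl⟩
      refine Finsupp.single_eq_of_ne ?_
      rintro rfl
      exact hv hi)
    rwa [Ideal.mul_top, sup_comm, ← Ideal.span_union, Set.singleton_union, ← Set.image_insert_eq,
      ← Finset.coe_insert] at this

/-- Exponents of the generators of the edge ideal of the subgraph of `G` induced on `W`. -/
def edgeExps (G : SimpleGraph (Fin n)) (W : Finset (Fin n)) : Set (Fin n →₀ ℕ) :=
  {e | ∃ i ∈ W, ∃ j ∈ W, G.Adj i j ∧ e = Finsupp.single i 1 + Finsupp.single j 1}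

lemma edgeIdeal_eq_span (G : SimpleGraph (Fin n)) :
    edgeIdeal K G = Ideal.span ((fun e => monomial e (1 : K)) '' edgeExps G Finset.univ) := by
  unfold edgeIdeal
  congr 1
  ext m
  constructor
  · rintro ⟨i, j, hij, rfl⟩
    exact ⟨_, ⟨i, Finset.mem_univ _, j, Finset.mem_univ _, hij, rfl⟩, by simp [X, monomial_mul]⟩
  · rintro ⟨_, ⟨i, -, j, -, hij, rfl⟩, rfl⟩
    exact ⟨i, j, hij, by simp [X, monomial_mul]⟩

lemma span_edgeExps_eq (G : SimpleGraph (Fin n)) {W : Finset (Fin n)} {v : Fin n} (hv : v ∈ W)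
    (N : Finset (Fin n)) (hN : ∀ u, u ∈ N ↔ u ∈ W ∧ G.Adj v u) :
    Ideal.span ((fun e => monomial e (1 : K)) '' edgeExps G W) =
      Ideal.span ((fun e => monomial e (1 : K)) '' edgeExps G (W.erase v)) ⊔
        Ideal.span {X v} * Ideal.span ((X : Fin n → MvPolynomial (Fin n) K) '' N) := by
  have hm : ∀ i j : Fin n, monomial (Finsupp.single i 1 + Finsupp.single j 1) (1 : K) =
    X i * X j := by intro i j; simp [X, monomial_mul]
  have hX : ∀ u ∈ N, (X v * X u : MvPolynomial (Fin n) K) ∈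
      Ideal.span {X v} * Ideal.span ((X : Fin n → MvPolynomial (Fin n) K) '' N) := fun u hu =>
    Ideal.mem_span_singleton_mul.2 ⟨X u, Ideal.subset_span ⟨u, hu, rfl⟩, rfl⟩
  apply le_antisymm
  · rw [Ideal.span_le]
    rintro _ ⟨_, ⟨i, hi, j, hj, hij, rfl⟩, rfl⟩
    by_cases hvi : i = v
    · have hj' : j ∈ N := (hN j).2 ⟨hj, hvi ▸ hij⟩
      have := Ideal.mem_sup_right (S := Ideal.span ((fun e => monomial e (1 : K)) ''
        edgeExps G (W.erase v))) (hX j hj')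
      rw [← hm] at this
      rw [hvi]
      exact this
    by_cases hvj : j = v
    · have hi' : i ∈ N := (hN i).2 ⟨hi, hvj ▸ hij.symm⟩
      have := Ideal.mem_sup_right (S := Ideal.span ((fun e => monomial e (1 : K)) ''
        edgeExps G (W.erase v))) (hX i hi')
      rw [← hm, add_comm] at this
      rw [hvj]
      exact this
    · exact Ideal.mem_sup_left (Ideal.subset_span ⟨_, ⟨i, Finset.mem_erase.2 ⟨hvi, hi⟩, j,
        Finset.mem_erase.2 ⟨hvj, hj⟩, hij, rfl⟩, rfl⟩)
  · refine sup_le (Ideal.span_mono (Set.image_mono ?_)) ?_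
    · rintro e ⟨i, hi, j, hj, h⟩
      exact ⟨i, Finset.mem_of_mem_erase hi, j, Finset.mem_of_mem_erase hj, h⟩
    · rw [Ideal.span_mul_span', Ideal.span_le, Set.singleton_mul]
      rintro _ ⟨_, ⟨u, hu, rfl⟩, rfl⟩
      obtain ⟨huW, hvu⟩ := (hN u).1 hu
      exact Ideal.subset_span ⟨_, ⟨v, hv, u, huW, hvu, rfl⟩, hm v u⟩

/-- Deleting a vertex `v` that is simplicial in the complement: with `N` the `G`-neighbours of `v`,
every edge avoiding `v` meets `N`, so that `I(G) = I(G - v) + x_v (x_u : u ∈ N)` with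
`I(G - v) ≤ (x_u : u ∈ N)`, and the mapping cone applies. -/
lemma linRes_of_cochordal (G : SimpleGraph (Fin n)) (hG : Chordal Gᶜ) (W : Finset (Fin n)) :
    Nonempty (LinRes K 2 (Ideal.span ((fun e => monomial e (1 : K)) '' edgeExps G W))) := by
  classical
  induction W using Finset.strongInduction with
  | H W ih =>
  rcases W.eq_empty_or_nonempty with rfl | hW
  · have : edgeExps G ∅ = ∅ := by
      ext e; simp [edgeExps]
    rw [this, Set.image_empty, Ideal.span_empty]
    exact LinRes.bot 2
  obtain ⟨v, hv, hsimp⟩ := exists_simplicial hG W hW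
  obtain ⟨A⟩ := ih (W.erase v) (Finset.erase_ssubset hv)
  let N := W.filter fun u => G.Adj v u
  have hNmem : ∀ u, u ∈ N ↔ u ∈ W ∧ G.Adj v u := fun u => Finset.mem_filter
  obtain ⟨B⟩ := linRes_span_X (K := K) N
  have hle : Ideal.span ((fun e => monomial e (1 : K)) '' edgeExps G (W.erase v)) ≤
      Ideal.span ((X : Fin n → MvPolynomial (Fin n) K) '' N) := by
    rw [Ideal.span_le]
    rintro _ ⟨_, ⟨i, hi, j, hj, hij, rfl⟩, rfl⟩
    rw [Finset.mem_erase] at hi hj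
    have hm : monomial (Finsupp.single i 1 + Finsupp.single j 1) (1 : K) = X i * X j := by
      simp [X, monomial_mul]
    change monomial _ _ ∈ _
    rw [hm]
    by_cases hvi : G.Adj v i
    · exact Ideal.mul_mem_right _ _ (Ideal.subset_span ⟨i, (hNmem i).2 ⟨hi.2, hvi⟩, rfl⟩)
    by_cases hvj : G.Adj v j
    · exact Ideal.mul_mem_left _ _ (Ideal.subset_span ⟨j, (hNmem j).2 ⟨hj.2, hvj⟩, rfl⟩)
    · have := hsimp i hi.2 j hj.2 ((SimpleGraph.compl_adj ..).2 ⟨hi.1.symm, hvi⟩)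
        ((SimpleGraph.compl_adj ..).2 ⟨hj.1.symm, hvj⟩) hij.ne
      exact absurd hij ((SimpleGraph.compl_adj ..).1 this).2
  have hcone := A.cone B hle v (mem_of_X_mul_mem (by
    rintro _ ⟨i, hi, j, hj, hij, rfl⟩
    rw [Finset.mem_erase] at hi hj
    rw [Finsupp.add_apply, Finsupp.single_eq_of_ne hi.1.symm, Finsupp.single_eq_of_ne hj.1.symm, add_zero]))
  rw [span_edgeExps_eq G hv N hNmem]
  exact hcone

end Cochordal

/-! ### The Koszul complex on the variables -/

section Koszul

variable {K : Type} [Field K] {n : ℕ}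

/-- The Koszul sign `(-1) ^ #{b ∈ A | b < a}` of adjoining `a` to `A`. -/
noncomputable def ksgn (K : Type) [Field K] {n : ℕ} (a : Fin n) (A : Finset (Fin n)) : MvPolynomial (Fin n) K :=
  (-1) ^ (A.filter (· < a)).card

/-- The Koszul differential on the variables `x_1, …, x_n` with coefficients in a module `M`. A
chain `∑ f A ⊗ e_A` is encoded as the function `f`; the differential sends `e_B` to
`∑ a ∈ B, ± x_a e_{B \ a}`, so the coefficient of `e_A` collects the `f (A ∪ a)` with `a ∉ A`. -/
noncomputable def kd (K : Type) [Field K] {n : ℕ} {M : Type} [AddCommGroup M] [Module (MvPolynomial (Fin n) K) M]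
    (f : Finset (Fin n) → M) (A : Finset (Fin n)) : M :=
  ∑ a ∈ Aᶜ, (ksgn K a A * X a) • f (insert a A)

lemma ksgn_insert {a v : Fin n} {B : Finset (Fin n)} (hv : v ∉ B) :
    ksgn K a (insert v B) = (if v < a then -1 else 1) * ksgn K a B := by
  unfold ksgn
  rw [Finset.filter_insert]
  split_ifs with h
  · rw [Finset.card_insert_of_notMem (by simp [hv]), pow_succ]; ring
  · rw [one_mul]

lemma ksgn_mul_self (a : Fin n) (B : Finset (Fin n)) : ksgn K a B * ksgn K a B = 1 := by
  unfold ksgn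
  rw [← mul_pow]; simp

lemma ksgn_swap {a v : Fin n} {B : Finset (Fin n)} (ha : a ∉ B) (hv : v ∉ B) (h : a ≠ v) :
    ksgn K a (insert v B) * ksgn K v (insert a B) = -(ksgn K a B * ksgn K v B) := by
  rw [ksgn_insert hv, ksgn_insert ha]
  rcases lt_or_gt_of_ne h with h | h
  · rw [if_neg h.not_gt, if_pos h]; ring
  · rw [if_pos h, if_neg h.not_gt]; ring

lemma ksgn_swap' {a v : Fin n} {B : Finset (Fin n)} (ha : a ∉ B) (hv : v ∉ B) (h : a ≠ v) :
    ksgn K a B * ksgn K v (insert a B) = -(ksgn K v B * ksgn K a (insert v B)) := by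
  rw [ksgn_insert hv, ksgn_insert ha]
  rcases lt_or_gt_of_ne h with h | h
  · rw [if_neg h.not_gt, if_pos h]; ring
  · rw [if_pos h, if_neg h.not_gt]; ring

section Module

variable {M N : Type} [AddCommGroup M] [Module (MvPolynomial (Fin n) K) M]
  [AddCommGroup N] [Module (MvPolynomial (Fin n) K) N]

lemma kd_add (f g : Finset (Fin n) → M) : kd K (f + g) = kd K f + kd K g := by
  funext A; simp [kd, Finset.sum_add_distrib]

lemma kd_sub (f g : Finset (Fin n) → M) : kd K (f - g) = kd K f - kd K g := by
  funext A; simp [kd, smul_sub, Finset.sum_sub_distrib]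

lemma kd_comp (φ : M →ₗ[MvPolynomial (Fin n) K] N) (f : Finset (Fin n) → M) :
    kd K (fun A => φ (f A)) = fun A => φ (kd K f A) := by
  funext A; simp [kd]

lemma kd_mem {Z : Submodule (MvPolynomial (Fin n) K) M} {f : Finset (Fin n) → M}
    (hf : ∀ A, f A ∈ Z) (A : Finset (Fin n)) : kd K f A ∈ Z :=
  Z.sum_mem fun _ _ => Z.smul_mem _ (hf _)

/-- The value of a chain at `∅` plays no role in its differential. -/
lemma kd_congr {f g : Finset (Fin n) → M} (h : ∀ A, A ≠ ∅ → f A = g A) : kd K f = kd K g := by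
  funext A
  exact Finset.sum_congr rfl fun a _ => by rw [h _ (Finset.insert_ne_empty _ _)]

lemma kd_kd (f : Finset (Fin n) → M) : kd K (kd K f) = 0 := by
  classical
  funext A
  simp only [kd, Finset.smul_sum, smul_smul, Pi.zero_apply]
  rw [Finset.sum_sigma']
  refine Finset.sum_involution (fun x _ => ⟨x.2, x.1⟩) ?_ ?_ ?_ ?_
  · rintro ⟨a, b⟩ hx
    simp only [Finset.mem_sigma, Finset.mem_compl, Finset.mem_insert, not_or] at hx
    obtain ⟨ha, hba, hb⟩ := hx
    dsimp only
    rw [Finset.insert_comm a b A, ← add_smul]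
    have := ksgn_swap' (K := K) ha hb (Ne.symm hba)
    have h0 : ksgn K a A * X a * (ksgn K b (insert a A) * X b) +
        ksgn K b A * X b * (ksgn K a (insert b A) * X a) = 0 := by
      linear_combination X a * X b * this
    rw [h0, zero_smul]
  · rintro ⟨a, b⟩ hx - h
    simp only [Finset.mem_sigma, Finset.mem_compl, Finset.mem_insert, not_or] at hx
    exact hx.2.1 (congrArg Sigma.fst h)
  · rintro ⟨a, b⟩ hx
    simp only [Finset.mem_sigma, Finset.mem_compl, Finset.mem_insert, not_or] at hx ⊢
    exact ⟨hx.2.2, Ne.symm hx.2.1, hx.1⟩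
  · rintro ⟨a, b⟩ hx
    rfl

end Module

/-- Division by a variable, discarding the remainder. -/
lemma exists_divX (v : Fin n) : ∃ ρ : MvPolynomial (Fin n) K →+ MvPolynomial (Fin n) K,
    (∀ b, b ≠ v → ∀ y, ρ (X b * y) = X b * ρ y) ∧ ∀ y, ρ (X v * y) = y := by
  refine ⟨AddMonoidHom.mk' (fun y => y.divMonomial (Finsupp.single v 1))
    (fun _ _ => add_divMonomial ..), fun b hb y => ?_, fun y => X_mul_divMonomial v y⟩
  ext c
  change coeff c ((X b * y).divMonomial _) = coeff c (X b * y.divMonomial _)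
  rw [coeff_divMonomial, coeff_X_mul', coeff_X_mul']
  have : b ∈ (Finsupp.single v 1 + c).support ↔ b ∈ c.support := by
    simp [Finsupp.single_eq_of_ne hb]
  rw [if_congr this rfl rfl]
  split_ifs with h
  · rw [coeff_divMonomial]
    congr 1
    rw [add_tsub_assoc_of_le]
    intro i
    by_cases hi : i = b
    · subst hi
      rw [Finsupp.single_eq_same]
      exact Nat.one_le_iff_ne_zero.2 (Finsupp.mem_support_iff.1 h)
    · rw [Finsupp.single_eq_of_ne hi]; exact Nat.zero_le _
  · rfl

/-- The contracting homotopy in the direction of one variable `v`: a cycle can be modified by a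
boundary so that it vanishes on all `A` containing `v`, without disturbing zeros elsewhere. -/
lemma exists_kd_step (v : Fin n) (f : Finset (Fin n) → MvPolynomial (Fin n) K) (hf : kd K f = 0) :
    ∃ g, ∀ A, (v ∈ A → kd K g A = f A) ∧ (v ∉ A → f A = 0 → kd K g A = 0) := by
  classical
  obtain ⟨ρ, hρ, hρv⟩ := exists_divX (K := K) v
  have hs : ∀ a A y, ρ (ksgn K a A * y) = ksgn K a A * ρ y := by
    intro a A y
    unfold ksgn
    rcases neg_one_pow_eq_or (MvPolynomial (Fin n) K) (A.filter (· < a)).card with h | h <;>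
      rw [h] <;> simp
  refine ⟨fun A => if v ∈ A then ksgn K v (A.erase v) * ρ (f (A.erase v)) else 0,
    fun A => ⟨fun hv => ?_, fun hv h0 => ?_⟩⟩
  · obtain ⟨B, hvB, rfl⟩ : ∃ B, v ∉ B ∧ insert v B = A :=
      ⟨A.erase v, Finset.notMem_erase _ _, Finset.insert_erase hv⟩
    have h1 := congrFun hf B
    have hc : Bᶜ = insert v (insert v B)ᶜ := by
      ext x; simp only [Finset.mem_compl, Finset.mem_insert]
      by_cases hx : x = v <;> simp [hx, hvB]
    simp only [kd, Pi.zero_apply, smul_eq_mul] at h1 ⊢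
    rw [hc, Finset.sum_insert (by simp)] at h1
    have h2 : ∑ a ∈ (insert v B)ᶜ, ksgn K a (insert v B) * X a *
        (if v ∈ insert a (insert v B) then ksgn K v ((insert a (insert v B)).erase v) *
          ρ (f ((insert a (insert v B)).erase v)) else 0) =
        - ksgn K v B * ρ (∑ a ∈ (insert v B)ᶜ, ksgn K a B * X a * f (insert a B)) := by
      rw [map_sum, Finset.mul_sum]
      refine Finset.sum_congr rfl fun a ha => ?_
      simp only [Finset.mem_compl, Finset.mem_insert, not_or] at ha
      rw [if_pos (by simp), Finset.insert_comm, Finset.erase_insert (by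
        simp [hvB, Ne.symm ha.1]), mul_assoc (ksgn K a B), hs, hρ a ha.1]
      linear_combination X a * ρ (f (insert a B)) * ksgn_swap (K := K) ha.2 hvB ha.1
    have h3 : ∑ a ∈ (insert v B)ᶜ, ksgn K a B * X a * f (insert a B) =
        -(ksgn K v B * (X v * f (insert v B))) := by linear_combination h1
    rw [h2, h3, map_neg, hs, hρv]
    linear_combination f (insert v B) * ksgn_mul_self (K := K) v B
  · refine Finset.sum_eq_zero fun a ha => ?_
    rw [Finset.mem_compl] at ha
    dsimp only
    split_ifs with h
    · have hva : v = a := by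
        rcases Finset.mem_insert.1 h with h | h
        · exact h
        · exact absurd h hv
      subst hva
      rw [Finset.erase_insert hv, h0]; simp
    · simp

/-- The Koszul complex on the variables is acyclic except at `∅`. -/
lemma kd_exact {κ : Type} (f : Finset (Fin n) → κ → MvPolynomial (Fin n) K) (hf : kd K f = 0)
    (h0 : f ∅ = 0) : ∃ g, kd K g = f := by
  classical
  have hcomp : ∀ (f : Finset (Fin n) → κ → MvPolynomial (Fin n) K) k,
      kd K (fun A => f A k) = fun A => kd K f A k := by
    intro f k; funext A; simp [kd]
  have key : ∀ (f : Finset (Fin n) → MvPolynomial (Fin n) K), kd K f = 0 → f ∅ = 0 →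
      ∃ g, kd K g = f := by
    intro f hf h0
    have : ∀ T : Finset (Fin n), ∃ g, ∀ A, (A = ∅ ∨ ∃ v ∈ T, v ∈ A) → kd K g A = f A := by
      intro T
      induction T using Finset.induction_on with
      | empty =>
        refine ⟨0, ?_⟩
        rintro A (rfl | ⟨v, hv, -⟩)
        · rw [h0]; simp [kd]
        · simp at hv
      | insert v T hv ih =>
        obtain ⟨g, hg⟩ := ih
        obtain ⟨g', hg'⟩ := exists_kd_step v (f - kd K g) (by rw [kd_sub, kd_kd, hf, sub_zero])
        refine ⟨g + g', fun A hA => ?_⟩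
        rw [kd_add, Pi.add_apply]
        by_cases hvA : v ∈ A
        · rw [(hg' A).1 hvA, Pi.sub_apply]; ring
        · have h1 : kd K g A = f A := by
            refine hg A (hA.imp_right ?_)
            rintro ⟨w, hw, hwA⟩
            rcases Finset.mem_insert.1 hw with rfl | hw
            · exact absurd hwA hvA
            · exact ⟨w, hw, hwA⟩
          rw [(hg' A).2 hvA (by rw [Pi.sub_apply, h1, sub_self]), h1, add_zero]
    obtain ⟨g, hg⟩ := this Finset.univ
    refine ⟨g, funext fun A => hg A ?_⟩
    rcases A.eq_empty_or_nonempty with rfl | ⟨v, hv⟩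
    · exact Or.inl rfl
    · exact Or.inr ⟨v, Finset.mem_univ _, hv⟩
  choose g hg using fun k => key (fun A => f A k)
    (by rw [hcomp, hf]; rfl) (congrFun h0 k)
  refine ⟨fun A k => g k A, ?_⟩
  funext A k
  exact (congrFun (hcomp _ k) A).symm.trans (congrFun (hg k) A)

end Koszul

/-! ### Vanishing of Koszul homology from a resolution -/

section Vanish

variable {K : Type} [Field K] {n : ℕ}

/-- The Koszul homology of `Z ⊆ ⨁_a S(-s a)` vanishes in homological degree `p` and internal degree
`j`, where `c ⊗ e_A` in the summand `a` has internal degree `deg c + s a + |A|`. A bounding chain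
`y` need not be homogeneous; the normalization `y ∅ = 0` is harmless since `kd` ignores `y ∅`. -/
def KVanish {κ : Type} (Z : Submodule (MvPolynomial (Fin n) K) (κ → MvPolynomial (Fin n) K))
    (s : κ → ℕ) (p j : ℕ) : Prop :=
  ∀ z : Finset (Fin n) → κ → MvPolynomial (Fin n) K, (∀ A, z A ∈ Z) → kd K z = 0 →
    (∀ A a c, coeff c (z A a) ≠ 0 → c.degree + s a + A.card = j ∧ A.card = p) →
    ∃ y, (∀ A, y A ∈ Z) ∧ y ∅ = 0 ∧ kd K y = z

variable {κ κ' : Type} [Fintype κ] [DecidableEq κ] {s : κ → ℕ} {s' : κ' → ℕ}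
  (f : (κ → MvPolynomial (Fin n) K) →ₗ[MvPolynomial (Fin n) K] (κ' → MvPolynomial (Fin n) K))

/-- Homogeneous chains with values in the image of a graded map lift to homogeneous chains. -/
lemma exists_chain_lift
    (hf : ∀ b a c, coeff c (f (Pi.single b 1) a) ≠ 0 → c.degree + s' a = s b) {p j : ℕ}
    {z : Finset (Fin n) → κ' → MvPolynomial (Fin n) K} (hz : ∀ A, z A ∈ LinearMap.range f)
    (hd : ∀ A a c, coeff c (z A a) ≠ 0 → c.degree + s' a + A.card = j ∧ A.card = p) :
    ∃ z' : Finset (Fin n) → κ → MvPolynomial (Fin n) K, (∀ A, f (z' A) = z A) ∧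
      ∀ A b c, coeff c (z' A b) ≠ 0 → c.degree + s b + A.card = j ∧ A.card = p := by
  have hM : ∀ w a, (Matrix.of fun a b => f (Pi.single b 1) a).mulVec w a = f w a := by
    intro w a
    conv_rhs => rw [pi_eq_sum_univ' w]
    rw [map_sum, Finset.sum_apply]
    refine Finset.sum_congr rfl fun b _ => ?_
    rw [map_smul, Pi.smul_apply, smul_eq_mul, mul_comm]
    congr 3
  have : ∀ A, ∃ z', f z' = z A ∧
      ∀ b c, coeff c (z' b) ≠ 0 → c.degree + s b + A.card = j ∧ A.card = p := by
    intro A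
    obtain ⟨w, hw⟩ := hz A
    obtain ⟨w', h1, h2⟩ := graded_lift Finsupp.degree (Matrix.of fun a b => f (Pi.single b 1) a)
      s' s (fun a b c hc => hf b a c hc) (fun x => x + A.card = j ∧ A.card = p) w
      (fun a c hc => hd A a c (by rwa [hM, hw] at hc))
    refine ⟨w', ?_, h2⟩
    rw [← hw]
    funext a
    rw [← hM, ← hM, h1]
  choose z' h1 h2 using this
  exact ⟨z', h1, h2⟩

/-- In homological degree `0` the homology is `Z / (x_1, …, x_n) Z`, which lives in the degrees of
generators of `Z`. -/
lemma kVanish_zero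
    (hf : ∀ b a c, coeff c (f (Pi.single b 1) a) ≠ 0 → c.degree + s' a = s b) {j : ℕ}
    (hj : ∀ b, s b < j) : KVanish (LinearMap.range f) s' 0 j := by
  classical
  intro z hz _ hd
  obtain ⟨z', h1, h2⟩ := exists_chain_lift f hf hz hd
  have hX : ∀ b, ∃ q : Fin n → MvPolynomial (Fin n) K, ∑ a, q a * X a = z' ∅ b := by
    intro b
    rw [← Ideal.mem_span_range_iff_exists_fun, ← Set.image_univ, mem_ideal_span_X_image]
    intro c hc
    have := (h2 ∅ b c (mem_support_iff.1 hc)).1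
    have hb := hj b
    rw [Finset.card_empty] at this
    by_contra! h
    have : c = 0 := by ext i; exact h i (Set.mem_univ i)
    subst this
    simp at *
    omega
  choose q hq using hX
  refine ⟨fun A => ∑ a, if A = {a} then f (fun b => q b a) else 0, fun A => ?_, ?_, ?_⟩
  · refine Submodule.sum_mem _ fun a _ => ?_
    split_ifs
    · exact ⟨_, rfl⟩
    · exact Submodule.zero_mem _
  · exact Finset.sum_eq_zero fun a _ => if_neg (Finset.singleton_ne_empty a).symm
  · funext A
    unfold kd
    by_cases hA : A = ∅
    · subst hA
      rw [← h1, Finset.compl_empty]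
      have : z' ∅ = ∑ a, (X a : MvPolynomial (Fin n) K) • fun b => q b a := by
        funext b
        rw [← hq b, Finset.sum_apply]
        exact Finset.sum_congr rfl fun a _ => mul_comm _ _
      rw [this, map_sum]
      refine Finset.sum_congr rfl fun a _ => ?_
      dsimp only
      rw [map_smul, Finset.sum_eq_single a]
      · simp [ksgn]
      · intro b _ hb
        rw [if_neg]
        simpa using hb.symm
      · simp
    · have hzA : z A = 0 := by
        funext a
        ext c
        by_contra hc
        exact hA (Finset.card_eq_zero.1 (hd A a c hc).2)
      rw [hzA]
      refine Finset.sum_eq_zero fun a ha => ?_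
      dsimp only
      rw [Finset.sum_eq_zero, smul_zero]
      intro b _
      refine if_neg fun h => ?_
      have := congrArg Finset.card h
      rw [Finset.card_insert_of_notMem (Finset.mem_compl.1 ha), Finset.card_singleton] at this
      exact hA (Finset.card_eq_zero.1 (by omega))

/-- The connecting map of `0 → ker f → ⨁ S(-s b) → im f → 0`: as the Koszul homology of a free
module vanishes in positive degrees, it injects the homology of `im f` in degree `p + 1` into that
of `ker f` in degree `p`. -/
lemma kVanish_succ
    (hf : ∀ b a c, coeff c (f (Pi.single b 1) a) ≠ 0 → c.degree + s' a = s b) {p j : ℕ}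
    (h : KVanish (LinearMap.ker f) s p j) : KVanish (LinearMap.range f) s' (p + 1) j := by
  classical
  intro z hz hz0 hd
  obtain ⟨z', h1, h2⟩ := exists_chain_lift f hf hz hd
  have h1' : (fun A => f (z' A)) = z := funext h1
  obtain ⟨y, hyZ, hy0, hy⟩ := h (kd K z')
    (fun A => by
      rw [LinearMap.mem_ker, ← congrFun (kd_comp f z') A, h1', hz0, Pi.zero_apply])
    (kd_kd z')
    (fun A b c hc => by
      unfold kd at hc
      rw [Finset.sum_apply, coeff_sum] at hc
      obtain ⟨a, ha, hc⟩ := Finset.exists_ne_zero_of_sum_ne_zero hc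
      have hX : coeff c (X a * z' (insert a A) b) ≠ 0 := by
        rw [Pi.smul_apply, smul_eq_mul, mul_assoc] at hc
        unfold ksgn at hc
        rcases neg_one_pow_eq_or (MvPolynomial (Fin n) K) (A.filter (· < a)).card with h | h <;>
          rw [h] at hc <;> simpa using hc
      rw [coeff_X_mul'] at hX
      split_ifs at hX with hac
      · have := h2 _ _ _ hX
        rw [Finset.card_insert_of_notMem (Finset.mem_compl.1 ha)] at this
        have hle : Finsupp.single a 1 ≤ c := Finsupp.single_le_iff.2
          (Nat.one_le_iff_ne_zero.2 (Finsupp.mem_support_iff.1 hac))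
        have hdeg : c.degree = (c - Finsupp.single a 1).degree + 1 := by
          conv_lhs => rw [← tsub_add_cancel_of_le hle]
          simp
        omega
      · exact absurd rfl hX)
  have hz'0 : z' ∅ = 0 := by
    funext b
    ext c
    by_contra hc
    simpa using (h2 ∅ b c hc).2
  obtain ⟨g, hg⟩ := kd_exact (z' - y) (by rw [kd_sub, hy, sub_self])
    (by rw [Pi.sub_apply, hz'0, hy0, sub_zero])
  refine ⟨fun A => if A = ∅ then 0 else f (g A), fun A => ?_, if_pos rfl, ?_⟩
  · dsimp only
    split_ifs
    · exact Submodule.zero_mem _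
    · exact ⟨_, rfl⟩
  · rw [kd_congr (g := fun A => f (g A)) (fun A hA => if_neg hA), kd_comp, hg]
    funext A
    rw [Pi.sub_apply, map_sub, LinearMap.mem_ker.1 (hyZ A), sub_zero, h1]

/-- If the `i`-th module of a resolution of `I` is generated in degrees at most `i + 2`, then the
Koszul homology of `I` in homological degree `p + 1` vanishes in internal degrees above `p + 3`. -/
lemma exists_kd_eq_of_res {I : Ideal (MvPolynomial (Fin n) K)} (F : GradedFreeRes K I)
    (hF : ∀ i a, F.shift i a ≤ i + 2) {p j : ℕ} (hj : p + 3 < j)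
    (z : Finset (Fin n) → MvPolynomial (Fin n) K) (hz : ∀ A, z A ∈ I) (hz0 : kd K z = 0)
    (hd : ∀ A c, coeff c (z A) ≠ 0 → c.degree + A.card = j ∧ A.card = p + 1) :
    ∃ y : Finset (Fin n) → MvPolynomial (Fin n) K, (∀ A, y A ∈ I) ∧ y ∅ = 0 ∧ kd K y = z := by
  have hdeg : ∀ {q : MvPolynomial (Fin n) K} {e c}, q.IsHomogeneous e → coeff c q ≠ 0 →
      c.degree = e := by
    intro q e c hq hc
    rw [← hq hc, Finsupp.degree_eq_weight_one]; rfl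
  have hdd : ∀ k b a c, coeff c (F.d k (Pi.single b 1) a) ≠ 0 →
      c.degree + F.shift k a = F.shift (k + 1) b := by
    intro k b a c hc
    rcases F.homog_d k b a with h | ⟨e, he, hh⟩
    · rw [h] at hc; exact absurd rfl hc
    · rw [hdeg hh hc, he, add_comm]
  have key : ∀ p k, p + k + 3 < j → KVanish (LinearMap.range (F.d k)) (F.shift k) p j := by
    intro p
    induction p with
    | zero =>
      intro k hk
      refine kVanish_zero (F.d k) (hdd k) fun b => ?_
      have := hF (k + 1) b
      omega
    | succ p ih =>
      intro k hk
      refine kVanish_succ (F.d k) (hdd k) ?_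
      rw [F.exact_succ]
      exact ih (k + 1) (by omega)
  let α : (Fin (F.rank 0) → MvPolynomial (Fin n) K) →ₗ[MvPolynomial (Fin n) K]
      (Unit → MvPolynomial (Fin n) K) := LinearMap.pi fun _ => F.aug
  have hα : KVanish (LinearMap.range α) (fun _ => 0) (p + 1) j := by
    refine kVanish_succ (s := F.shift 0) α (fun b a c hc => hdeg (F.homog_aug b) hc) ?_
    have : LinearMap.ker α = LinearMap.range (F.d 0) := by
      rw [← F.exact_zero]
      ext w
      simp [α, LinearMap.mem_ker, funext_iff]
    rw [this]
    exact key p 0 (by omega)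
  have hr : ∀ w : Unit → MvPolynomial (Fin n) K, w ∈ LinearMap.range α ↔ w () ∈ I := by
    intro w
    refine Iff.trans ?_ (SetLike.ext_iff.1 F.aug_range (w ()))
    exact ⟨fun ⟨x, hx⟩ => ⟨x, congrFun hx ()⟩, fun ⟨x, hx⟩ => ⟨x, funext fun _ => hx⟩⟩
  obtain ⟨y, hy, hy0, hyz⟩ := hα (fun A _ => z A) (fun A => (hr _).2 (hz A))
    (by
      funext A u
      refine Eq.trans ?_ (congrFun hz0 A)
      simp [kd])
    (fun A _ c hc => hd A c hc)
  refine ⟨fun A => y A (), fun A => (hr _).1 (hy A), congrFun hy0 (), ?_⟩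
  funext A
  rw [← congrFun (congrFun hyz A) ()]
  simp [kd]

end Vanish

/-! ### The Koszul cycle of a chordless cycle in the complement -/

section CycleClass

variable {K : Type} [Field K] {n : ℕ}

lemma ksgn_eq_C (a : Fin n) (A : Finset (Fin n)) :
    ksgn K a A = C ((-1) ^ (A.filter (· < a)).card) := by
  simp [ksgn]

lemma coeff_ksgn_mul (a : Fin n) (A : Finset (Fin n)) (p : MvPolynomial (Fin n) K)
    (c : Fin n →₀ ℕ) : coeff c (ksgn K a A * p) = coeff 0 (ksgn K a A) * coeff c p := by
  rw [ksgn_eq_C, coeff_C_mul, coeff_zero_C]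

/-- Only the vertices `a` and `b` contribute to the coefficient of `x_a x_b` in a boundary. Writing
`W = A ∪ {a, b}`, that coefficient is, up to a unit, the difference of the values at `b` and `a` of
one function: `x ↦ ±` the coefficient of `x_x` in `w (W \ x)`. -/
lemma coeff_kd_pair (w : Finset (Fin n) → MvPolynomial (Fin n) K) {W : Finset (Fin n)}
    {a b : Fin n} (ha : a ∈ W) (hb : b ∈ W) (hab : a ≠ b) :
    ∃ ε : K, ε ≠ 0 ∧ coeff (Finsupp.single a 1 + Finsupp.single b 1) (kd K w ((W.erase a).erase b)) =
      ε * (coeff 0 (ksgn K b (W.erase b)) * coeff (Finsupp.single b 1) (w (W.erase b)) -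
        coeff 0 (ksgn K a (W.erase a)) * coeff (Finsupp.single a 1) (w (W.erase a))) := by
  classical
  obtain ⟨A, haA, hbA, rfl⟩ : ∃ A, a ∉ A ∧ b ∉ A ∧ insert a (insert b A) = W :=
    ⟨(W.erase a).erase b, by simp, by simp, by
      rw [Finset.insert_erase (Finset.mem_erase.2 ⟨hab.symm, hb⟩), Finset.insert_erase ha]⟩
  have h1 : (insert a (insert b A)).erase a = insert b A :=
    Finset.erase_insert (by simp [hab, haA])
  have h2 : (insert a (insert b A)).erase b = insert a A := by
    rw [Finset.insert_comm, Finset.erase_insert (by simp [hab.symm, hbA])]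
  have h3 : (insert b A).erase b = A := Finset.erase_insert hbA
  rw [h1, h2, h3]
  have hsum : coeff (Finsupp.single a 1 + Finsupp.single b 1) (kd K w A) =
      coeff 0 (ksgn K a A) * coeff (Finsupp.single b 1) (w (insert a A)) +
      coeff 0 (ksgn K b A) * coeff (Finsupp.single a 1) (w (insert b A)) := by
    unfold kd
    rw [coeff_sum, ← Finset.sum_subset (s₁ := {a, b}) (by
      intro x hx
      rcases Finset.mem_insert.1 hx with rfl | hx
      · simpa using haA
      · rw [Finset.mem_singleton.1 hx]; simpa using hbA), Finset.sum_pair hab]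
    · simp only [smul_eq_mul, mul_assoc, coeff_ksgn_mul]
      rw [coeff_X_mul, add_comm (Finsupp.single a 1), coeff_X_mul]
    · intro x _ hx
      simp only [Finset.mem_insert, Finset.mem_singleton, not_or] at hx
      simp only [smul_eq_mul, mul_assoc, coeff_ksgn_mul]
      rw [coeff_X_mul', if_neg, mul_zero]
      simp [Finsupp.single_eq_of_ne hx.1, Finsupp.single_eq_of_ne hx.2]
  have hself : ∀ (x : Fin n) (B : Finset (Fin n)), coeff 0 (ksgn K x B) * coeff 0 (ksgn K x B) = (1 : K) := by
    intro x B
    rw [← coeff_ksgn_mul, ksgn_mul_self]; simp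
  have hswap : coeff 0 (ksgn K a A) * coeff 0 (ksgn K b (insert a A)) =
      -(coeff 0 (ksgn K b A) * coeff 0 (ksgn K a (insert b A))) := by
    rw [← coeff_ksgn_mul, ← coeff_ksgn_mul, ksgn_swap' haA hbA hab, coeff_neg]
  refine ⟨coeff 0 (ksgn K a A) * coeff 0 (ksgn K b (insert a A)),
    mul_ne_zero (left_ne_zero_of_mul_eq_one (hself _ _))
      (left_ne_zero_of_mul_eq_one (hself _ _)), ?_⟩
  rw [hsum]
  linear_combination (-(coeff 0 (ksgn K a A) * coeff (Finsupp.single b 1) (w (insert a A)))) *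
      hself b (insert a A) +
    (-(coeff 0 (ksgn K b A) * coeff (Finsupp.single a 1) (w (insert b A)))) *
      hself a (insert b A) +
    (coeff 0 (ksgn K a (insert b A)) * coeff (Finsupp.single a 1) (w (insert b A))) * hswap

lemma coeff_pair_eq_zero (G : SimpleGraph (Fin n)) {a b : Fin n} (hab : ¬ G.Adj a b)
    {y : MvPolynomial (Fin n) K} (hy : y ∈ edgeIdeal K G) :
    coeff (Finsupp.single a 1 + Finsupp.single b 1) y = 0 := by
  classical
  by_contra h
  rw [edgeIdeal_eq_span, mem_ideal_span_monomial_image] at hy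
  obtain ⟨_, ⟨i, -, j, -, hij, rfl⟩, hle⟩ := hy _ (mem_support_iff.2 h)
  have key : ∀ x, (Finsupp.single i 1 + Finsupp.single j 1 : Fin n →₀ ℕ) x ≠ 0 →
      x = a ∨ x = b := by
    intro x hx
    by_contra! hx'
    have := hle x
    rw [Finsupp.add_apply (Finsupp.single a 1), Finsupp.single_eq_of_ne hx'.1,
      Finsupp.single_eq_of_ne hx'.2] at this
    omega
  have hi := key i (by simp)
  have hj := key j (by simp)
  rcases hi with rfl | rfl <;> rcases hj with rfl | rfl
  · exact hij.ne rfl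
  · exact hab hij
  · exact hab hij.symm
  · exact hij.ne rfl

/-- Let `c 0, …, c (m - 1)` be a cycle of length `m ≥ 4` without chords in the complement of `G`,
with vertex set `W`. The chain `x_u x_v ⊗ e_{W \ {u, v}}` at the edge `u = c 0`, `v = c (m - 1)`
has its boundary in `I(G)`. If that boundary bounds a chain with values in `I(G)`, then acyclicity
of the Koszul complex produces `w` whose coefficients define a function on the cycle that is equal
at the ends of every edge of the cycle other than `{u, v}`, but not at `u` and `v`. -/
lemma not_res_of_cycle (G : SimpleGraph (Fin n)) {m : ℕ} (hm : 4 ≤ m) (c : ℕ → Fin n)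
    (hc : ∀ i < m, ∀ j < m, c i = c j → i = j)
    (hG : ∀ i j, i < j → j < m → (G.Adj (c i) (c j) ↔ ¬ (i + 1 = j ∨ (i = 0 ∧ j = m - 1))))
    (F : GradedFreeRes K (edgeIdeal K G)) (hF : ∀ i a, F.shift i a ≤ i + 2) : False := by
  classical
  set W := (Finset.range m).image c with hW
  have hcW : ∀ i < m, c i ∈ W := fun i hi => Finset.mem_image_of_mem c (Finset.mem_range.2 hi)
  have hWcard : W.card = m := by
    rw [hW, Finset.card_image_of_injOn, Finset.card_range]
    intro i hi j hj h
    exact hc i (by simpa using hi) j (by simpa using hj) h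
  set u := c 0 with hu
  set v := c (m - 1) with hv
  have huv : u ≠ v := fun h => by have := hc _ (by omega) _ (by omega) h; omega
  set B := (W.erase u).erase v with hB
  have huW : u ∈ W := hcW 0 (by omega)
  have hvW : v ∈ W.erase u := Finset.mem_erase.2 ⟨huv.symm, hcW _ (by omega)⟩
  have hBcard : B.card = m - 2 := by
    rw [hB, Finset.card_erase_of_mem hvW, Finset.card_erase_of_mem huW, hWcard]; omega
  have hBmem : ∀ i < m, (c i ∈ B ↔ i ≠ 0 ∧ i ≠ m - 1) := by
    intro i hi
    rw [hB, Finset.mem_erase, Finset.mem_erase, and_comm, and_assoc]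
    refine and_congr (not_congr ⟨hc i hi 0 (by omega), fun h => by rw [h]⟩) ?_
    rw [and_iff_right (hcW i hi)]
    exact not_congr ⟨hc i hi (m - 1) (by omega), fun h => by rw [h]⟩
  have hB0 : B ≠ ∅ := by
    intro h; rw [h, Finset.card_empty] at hBcard; omega
  let e : Finset (Fin n) → MvPolynomial (Fin n) K := fun A => if A = B then X u * X v else 0
  have hXX : ∀ i j, i < j → j < m → ¬ (i + 1 = j ∨ (i = 0 ∧ j = m - 1)) →
      (X (c i) * X (c j) : MvPolynomial (Fin n) K) ∈ edgeIdeal K G := fun i j hij hj h =>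
    Ideal.subset_span ⟨_, _, (hG i j hij hj).2 h, rfl⟩
  have hz : ∀ A, kd K e A ∈ edgeIdeal K G := by
    intro A
    refine Ideal.sum_mem _ fun a _ => ?_
    simp only [e]
    split_ifs with h
    · have haB : a ∈ B := h ▸ Finset.mem_insert_self a A
      obtain ⟨i, hi, rfl⟩ := Finset.mem_image.1
        (Finset.mem_of_mem_erase (Finset.mem_of_mem_erase haB))
      rw [Finset.mem_range] at hi
      obtain ⟨h0, h1⟩ := (hBmem i hi).1 haB
      -- `c i` is joined in `G` to at least one of the ends of the edge `{u, v}`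
      by_cases hi1 : i = 1
      · have := hXX i (m - 1) (by omega) (by omega) (by omega)
        have h2 := Ideal.mul_mem_left _ (ksgn K (c i) A * X u) this
        rw [smul_eq_mul]
        convert h2 using 1
        ring
      · have := hXX 0 i (by omega) (by omega) (by omega)
        have h2 := Ideal.mul_mem_left _ (ksgn K (c i) A * X v) this
        rw [smul_eq_mul]
        convert h2 using 1
        ring
    · rw [smul_zero]; exact Ideal.zero_mem _
  have hzd : ∀ A d, coeff d (kd K e A) ≠ 0 → d.degree + A.card = m ∧ A.card = m - 4 + 1 := by
    intro A d hd
    unfold kd at hd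
    rw [coeff_sum] at hd
    obtain ⟨a, ha, hd⟩ := Finset.exists_ne_zero_of_sum_ne_zero hd
    simp only [e] at hd
    split_ifs at hd with h
    · have h1 : A.card + 1 = m - 2 := by
        rw [← hBcard, ← h, Finset.card_insert_of_notMem (Finset.mem_compl.1 ha)]
      rw [smul_eq_mul, mul_assoc, coeff_ksgn_mul] at hd
      have h2 := right_ne_zero_of_mul hd
      have h3 : (X a * (X u * X v) : MvPolynomial (Fin n) K) = monomial
          (Finsupp.single a 1 + (Finsupp.single u 1 + Finsupp.single v 1)) 1 := by
        simp [X, monomial_mul]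
      rw [h3, coeff_monomial] at h2
      have h4 : Finsupp.single a 1 + (Finsupp.single u 1 + Finsupp.single v 1) = d := by
        by_contra h; simp [h] at h2
      have h5 : d.degree = 3 := by rw [← h4]; simp
      omega
    · simp at hd
  obtain ⟨y, hyI, hy0, hy⟩ := exists_kd_eq_of_res F hF (p := m - 4) (j := m) (by omega)
    (kd K e) hz (kd_kd e) hzd
  obtain ⟨w, hw⟩ := kd_exact (K := K) (fun A (_ : Unit) => e A - y A)
    (by
      funext A _
      have := congrFun (kd_sub (K := K) e y) A
      rw [hy, sub_self] at this
      refine Eq.trans ?_ this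
      simp [kd])
    (by funext _; simp [e, hy0, hB0.symm])
  let w' : Finset (Fin n) → MvPolynomial (Fin n) K := fun A => w A ()
  have hw' : ∀ A, kd K w' A = e A - y A := by
    intro A
    refine Eq.trans ?_ (congrFun (congrFun hw A) ())
    simp [kd, w']
  let γ : Fin n → K := fun x =>
    coeff 0 (ksgn K x (W.erase x)) * coeff (Finsupp.single x 1) (w' (W.erase x))
  have hγ : ∀ a ∈ W, ∀ b ∈ W, a ≠ b → ¬ G.Adj a b → ∃ ε : K, ε ≠ 0 ∧
      coeff (Finsupp.single a 1 + Finsupp.single b 1) (e ((W.erase a).erase b)) =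
        ε * (γ b - γ a) := by
    intro a ha b hb hab hadj
    obtain ⟨ε, h0, hε⟩ := coeff_kd_pair w' ha hb hab
    refine ⟨ε, h0, ?_⟩
    rw [hw', coeff_sub, coeff_pair_eq_zero G hadj (hyI _), sub_zero] at hε
    exact hε
  have hstep : ∀ i, i + 1 < m → γ (c (i + 1)) = γ (c i) := by
    intro i hi
    have hne : c i ≠ c (i + 1) := fun h => by
      have := hc _ (by omega) _ hi h; omega
    obtain ⟨ε, h0, hε⟩ := hγ (c i) (hcW i (by omega)) (c (i + 1)) (hcW _ hi) hne
      fun h => (hG i (i + 1) (by omega) hi).1 h (Or.inl rfl)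
    have hA : (W.erase (c i)).erase (c (i + 1)) ≠ B := by
      intro h
      by_cases him : i + 1 < m - 1
      · have := (hBmem (i + 1) hi).2 (by omega)
        rw [← h] at this
        simp at this
      · have := (hBmem i (by omega)).2 (by omega)
        rw [← h] at this
        simp at this
    simp only [e] at hε
    rw [if_neg hA, coeff_zero] at hε
    exact sub_eq_zero.1 ((mul_eq_zero.1 hε.symm).resolve_left h0)
  have hconst : ∀ i < m, γ (c i) = γ (c 0) := by
    intro i
    induction i with
    | zero => intro _; rfl
    | succ i ih => intro hi; rw [hstep i hi, ih (by omega)]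
  obtain ⟨ε, -, hε⟩ := hγ u huW v (Finset.mem_of_mem_erase hvW) huv
    fun h => (hG 0 (m - 1) (by omega) (by omega)).1 h (Or.inr ⟨rfl, rfl⟩)
  rw [hconst (m - 1) (by omega), sub_self, mul_zero] at hε
  simp only [e] at hε
  rw [if_pos hB.symm, coeff_X_mul, coeff_X, if_pos rfl] at hε
  exact one_ne_zero hε

lemma not_res_of_not_chordal (G : SimpleGraph (Fin n)) (hG : ¬ Chordal Gᶜ)
    (F : GradedFreeRes K (edgeIdeal K G)) (hF : ∀ i a, F.shift i a ≤ i + 2) : False := by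
  unfold Chordal at hG
  push Not at hG
  obtain ⟨x, w, hw, hm, hch⟩ := hG
  have hinj : ∀ i < w.length, ∀ j < w.length, w.getVert i = w.getVert j → i = j :=
    fun i hi j hj h => hw.getVert_injOn' (by simp; omega) (by simp; omega) h
  have hlast : w.getVert w.length = w.getVert 0 := by simp
  refine not_res_of_cycle G hm w.getVert hinj (fun i j hij hj => ⟨?_, fun h => ?_⟩) F hF
  · rintro hadj (rfl | ⟨rfl, rfl⟩)
    · exact ((SimpleGraph.compl_adj ..).1 (w.adj_getVert_succ (i := i) (by omega))).2 hadj
    · have := w.adj_getVert_succ (i := w.length - 1) (by omega)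
      rw [Nat.sub_add_cancel (by omega), hlast] at this
      exact ((SimpleGraph.compl_adj ..).1 this).2 hadj.symm
  · by_contra hadj
    have hne : w.getVert i ≠ w.getVert j := fun h' => by
      have := hinj i (by omega) j hj h'; omega
    have he := hch _ _ (w.getVert_mem_support i) (w.getVert_mem_support j)
      ((SimpleGraph.compl_adj ..).2 ⟨hne, hadj⟩)
    rw [SimpleGraph.Walk.mk_mem_edges_iff_exists] at he
    obtain ⟨k, hk, hk'⟩ := he
    apply h
    by_cases hkm : k + 1 < w.length
    · rcases Sym2.eq_iff.1 hk' with ⟨h1, h2⟩ | ⟨h1, h2⟩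
      · have := hinj _ hk _ (by omega) h1
        have := hinj _ hkm _ hj h2
        omega
      · have := hinj _ hk _ hj h1
        have := hinj _ hkm _ (by omega) h2
        omega
    · have hkl : k + 1 = w.length := by omega
      rw [hkl, hlast] at hk'
      rcases Sym2.eq_iff.1 hk' with ⟨h1, h2⟩ | ⟨h1, h2⟩
      · have := hinj _ (by omega) _ hj h2
        omega
      · have := hinj _ hk _ hj h1
        have := hinj _ (by omega) _ (by omega) h2
        omega

end CycleClass

/-! ### The bound `reg ≥ 2` -/

/-- A resolution of `I(G) ≠ 0` has a generator with nonzero image in `I(G)`, which has degree at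
least `2`. -/
lemma two_le_of_res {K : Type} [Field K] {n : ℕ} (G : SimpleGraph (Fin n))
    (hG : ∃ u v, G.Adj u v) (F : GradedFreeRes K (edgeIdeal K G)) (r : ℤ)
    (hr : ∀ i, ∀ a : Fin (F.rank i), (F.shift i a : ℤ) - (i : ℤ) ≤ r) : 2 ≤ r := by
  classical
  obtain ⟨u, v, huv⟩ := hG
  have hne : ∃ a, F.aug (Pi.single a 1) ≠ 0 := by
    by_contra! h
    have h0 : F.aug = 0 := by
      refine LinearMap.pi_ext' fun a => LinearMap.ext_ring ?_
      simpa using h a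
    have hmem : (X u * X v : MvPolynomial (Fin n) K) ∈ LinearMap.range F.aug := by
      rw [F.aug_range]
      exact Ideal.subset_span ⟨u, v, huv, rfl⟩
    obtain ⟨x, hx⟩ := hmem
    rw [h0, LinearMap.zero_apply] at hx
    exact mul_ne_zero (X_ne_zero u) (X_ne_zero v) hx.symm
  obtain ⟨a, ha⟩ := hne
  obtain ⟨c, hc⟩ := MvPolynomial.ne_zero_iff.1 ha
  have hmem : F.aug (Pi.single a 1) ∈ edgeIdeal K G := by
    have : F.aug (Pi.single a 1) ∈ LinearMap.range F.aug := ⟨_, rfl⟩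
    rwa [F.aug_range] at this
  obtain ⟨_, ⟨i, -, j, -, -, rfl⟩, hle⟩ := mem_ideal_span_monomial_image.1
    ((edgeIdeal_eq_span (K := K) G).le hmem) c (mem_support_iff.2 hc)
  have h1 : c.degree = F.shift 0 a := by
    rw [← F.homog_aug a hc, Finsupp.degree_eq_weight_one]; rfl
  have h2 : (Finsupp.single i 1 + Finsupp.single j 1 : Fin n →₀ ℕ).degree ≤ c.degree := by
    rw [← tsub_add_cancel_of_le hle, map_add _ (c - _)]
    exact Nat.le_add_left _ _
  rw [map_add, Finsupp.degree_single, Finsupp.degree_single, h1] at h2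
  have := hr 0 a
  push_cast at this
  omega

/-- **Fröberg's characterization.**  Let `G` be a finite simple graph (with at least
one edge).  Then `reg I(G) = 2` if and only if `G` is co-chordal, i.e. the complement
graph `Gᶜ` is chordal. -/
theorem regularity_eq_two_iff_cochordal {n : ℕ} (K : Type) [Field K]
    (G : SimpleGraph (Fin n)) (hG : ∃ u v, G.Adj u v) :
    reg K (edgeIdeal K G) = 2 ↔ Chordal Gᶜ := by
  constructor
  · intro h
    by_contra hch
    have hne : { r : ℤ | ∃ F : GradedFreeRes K (edgeIdeal K G),
        ∀ i, ∀ a : Fin (F.rank i), (F.shift i a : ℤ) - (i : ℤ) ≤ r }.Nonempty := by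
      -- the infimum of the empty set is `0`, so `reg = 2` already yields a resolution
      by_contra he
      rw [Set.not_nonempty_iff_eq_empty] at he
      rw [reg, he, Int.csInf_empty] at h
      omega
    have hmem := Int.csInf_mem hne ⟨2, fun r ⟨F, hr⟩ => two_le_of_res G hG F r hr⟩
    change reg K (edgeIdeal K G) ∈ _ at hmem
    rw [h] at hmem
    obtain ⟨F, hF⟩ := hmem
    refine not_res_of_not_chordal G hch F fun i a => ?_
    have := hF i a
    omega
  · intro hch
    obtain ⟨A⟩ := linRes_of_cochordal (K := K) G hch Finset.univ
    rw [← edgeIdeal_eq_span] at A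
    obtain ⟨F, hF⟩ := A.toGradedFreeRes
    refine IsLeast.csInf_eq ⟨⟨F, fun i a => ?_⟩, fun r ⟨F, hr⟩ => two_le_of_res G hG F r hr⟩
    rw [hF]
    push_cast
    omega
end

section
/- Let G be a finite simple graph and let β(G) be the minimum size of a maximal matching in G. Then reg I(G) ≤ β(G) + 1. -/
/-!
For a vertex `x`, an ideal `J = I(G) + (x_a : a ∈ A)` with `x ∉ A` satisfies
`J : x = I(G) + (x_a : a ∈ A ∪ N(x))` and `J + (x) = I(G) + (x_a : a ∈ A ∪ {x})`, and in general
`reg J ≤ max (reg (J : x) + 1) (reg (J + (x)))`.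

Suppose every edge of `G` avoiding `A` meets one of `k` given edges. By induction on `k`,
`reg J ≤ k + 1` (`regLE_of_cover`). For `k = 0` the ideal is generated by variables. Otherwise let
`uv` be one of the edges and apply the inequality to `x = u`, and then to `x = v` in `J + (u)`. This
leaves the ideals attached to `A ∪ N(u)`, `A ∪ {u} ∪ N(v)` and `A ∪ {u, v}`. Since `v ∈ N(u)`, in
each of them every surviving edge meets one of the remaining `k - 1` edges, so they have
regularity at most `k`. A maximal matching meets every edge, so `A = ∅` gives the theorem.

The inequality for `reg J` (`RegLE.of_colon`) comes from the exact sequence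
`0 → (J : x)(-1) → J ⊕ S(-1) → J + (x) → 0`: the horseshoe lemma `Res.horseshoe` bounds the middle
term, and the free summand `S(-1)` is then removed by `Res.third`. When `J : x = J`, the lemma
`Res.third` applied to the same sequence bounds `J + (x)`, which handles ideals generated by
variables. Regularity bounds are handled through the predicate `Res`, which describes a bounded free
resolution one syzygy module at a time; `Res.exists_modRes` splices the syzygies into matrices.
-/

open MvPolynomial

/-- A matching of `G`: a set of pairwise vertex-disjoint edges of `G`. -/
def IsMatchingSet {V : Type} (G : SimpleGraph V) (M : Finset (Sym2 V)) : Prop :=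
  (↑M ⊆ G.edgeSet) ∧ ∀ e ∈ M, ∀ f ∈ M, e ≠ f → ∀ u ∈ e, ∀ v ∈ f, u ≠ v

/-- A maximal matching: a matching not properly contained in any other matching. -/
def IsMaximalMatching {V : Type} (G : SimpleGraph V) (M : Finset (Sym2 V)) : Prop :=
  IsMatchingSet G M ∧ ∀ M', IsMatchingSet G M' → M ⊆ M' → M' = M

/-- `β(G)`: the minimum size of a maximal matching of `G`. -/
noncomputable def minMaxMatching {V : Type} (G : SimpleGraph V) : ℕ :=
  sInf { k | ∃ M : Finset (Sym2 V), IsMaximalMatching G M ∧ M.card = k }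

/-! ### Graded modules with bounded free resolutions -/

section Homological

variable {n : ℕ} {K : Type} [Field K]

local notation "S" => MvPolynomial (Fin n) K

/-- The degree-`d` elements of the twisted polynomial ring `S(-t)`. -/
def tw (t d : ℕ) : Set S := {s | s = 0 ∨ ∃ e, d = t + e ∧ s.IsHomogeneous e}

/-- The degree-`d` elements of the graded free module `⨁ₐ S(-shift a)`. -/
def freeDeg {k : ℕ} (shift : Fin k → ℕ) (d : ℕ) : Set (Fin k → S) :=
  {f | ∀ a, f a ∈ tw (shift a) d}

variable (n K) in
/-- The family `deg` of subsets of `M` behaves like the family of homogeneous parts of a graded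
`S`-module. Neither independence of the parts nor `M = ⨁ deg d` is required. -/
structure IsGr {M : Type} [AddCommGroup M] [Module S M] (deg : ℕ → Set M) : Prop where
  zero_mem : ∀ d, 0 ∈ deg d
  add_mem : ∀ d x y, x ∈ deg d → y ∈ deg d → x + y ∈ deg d
  smul_mem : ∀ d e (s : S) x, s.IsHomogeneous e → x ∈ deg d → s • x ∈ deg (d + e)

lemma IsGr.neg_mem {M : Type} [AddCommGroup M] [Module S M] {deg : ℕ → Set M} (h : IsGr n K deg)
    {d : ℕ} {x : M} (hx : x ∈ deg d) : -x ∈ deg d := by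
  have := h.smul_mem d 0 (-1) x (isHomogeneous_one _ _).neg hx
  simpa using this

lemma IsGr.sub_mem {M : Type} [AddCommGroup M] [Module S M] {deg : ℕ → Set M} (h : IsGr n K deg)
    {d : ℕ} {x y : M} (hx : x ∈ deg d) (hy : y ∈ deg d) : x - y ∈ deg d := by
  rw [sub_eq_add_neg]
  exact h.add_mem _ _ _ hx (h.neg_mem hy)

lemma IsGr.sum_mem {M : Type} [AddCommGroup M] [Module S M] {deg : ℕ → Set M} (h : IsGr n K deg)
    {d : ℕ} {ι : Type} (s : Finset ι) (f : ι → M) (hf : ∀ i ∈ s, f i ∈ deg d) :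
    ∑ i ∈ s, f i ∈ deg d :=
  Finset.sum_induction f (· ∈ deg d) (fun x y => h.add_mem d x y) (h.zero_mem d) hf

lemma isGr_tw (t : ℕ) : IsGr n K (tw t : ℕ → Set S) where
  zero_mem _ := Or.inl rfl
  add_mem d x y hx hy := by
    rcases hx with rfl | ⟨e, he, hx⟩
    · simpa using hy
    rcases hy with rfl | ⟨e', he', hy⟩
    · exact Or.inr ⟨e, he, by simpa using hx⟩
    obtain rfl : e = e' := by omega
    exact Or.inr ⟨e, he, hx.add hy⟩
  smul_mem d e s x hs hx := by
    rcases hx with rfl | ⟨e', he', hx⟩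
    · exact Or.inl (by simp)
    · exact Or.inr ⟨e + e', by omega, hs.mul hx⟩

lemma isGr_freeDeg {k : ℕ} (shift : Fin k → ℕ) :
    IsGr n K (freeDeg shift : ℕ → Set (Fin k → S)) where
  zero_mem _ _ := (isGr_tw _).zero_mem _
  add_mem _ _ _ hx hy a := (isGr_tw _).add_mem _ _ _ (hx a) (hy a)
  smul_mem _ _ _ _ hs hx a := (isGr_tw _).smul_mem _ _ _ _ hs (hx a)

lemma IsGr.submodule {M : Type} [AddCommGroup M] [Module S M] {deg : ℕ → Set M} (h : IsGr n K deg)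
    (N : Submodule S M) : IsGr n K (fun d => {x : N | (x : M) ∈ deg d}) where
  zero_mem d := h.zero_mem d
  add_mem _ _ _ hx hy := h.add_mem _ _ _ hx hy
  smul_mem _ _ _ _ hs hx := h.smul_mem _ _ _ _ hs hx

lemma IsGr.prod {M N : Type} [AddCommGroup M] [Module S M] [AddCommGroup N] [Module S N]
    {degM : ℕ → Set M} {degN : ℕ → Set N} (hM : IsGr n K degM) (hN : IsGr n K degN) :
    IsGr n K (fun d => degM d ×ˢ degN d) where
  zero_mem d := ⟨hM.zero_mem d, hN.zero_mem d⟩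
  add_mem _ _ _ hx hy := ⟨hM.add_mem _ _ _ hx.1 hy.1, hN.add_mem _ _ _ hx.2 hy.2⟩
  smul_mem _ _ _ _ hs hx := ⟨hM.smul_mem _ _ _ _ hs hx.1, hN.smul_mem _ _ _ _ hs hx.2⟩

/-- A linear map out of a graded free module is degree-preserving as soon as it is so on the
basis. -/
lemma map_freeDeg {M : Type} [AddCommGroup M] [Module S M] {deg : ℕ → Set M} (h : IsGr n K deg)
    {k : ℕ} {shift : Fin k → ℕ} (φ : (Fin k → S) →ₗ[S] M)
    (hφ : ∀ a, φ (Pi.single a 1) ∈ deg (shift a)) {d : ℕ} {f : Fin k → S}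
    (hf : f ∈ freeDeg shift d) : φ f ∈ deg d := by
  have h1 : φ f = ∑ a, f a • φ (Pi.single a 1) := by
    conv_lhs => rw [pi_eq_sum_univ' f]
    simp [map_sum, Pi.single]
  rw [h1]
  refine h.sum_mem _ _ fun a _ => ?_
  rcases hf a with h0 | ⟨e, he, hh⟩
  · rw [h0, zero_smul]; exact h.zero_mem d
  · rw [he]; exact h.smul_mem _ _ _ _ hh (hφ a)

variable (n K) in
/-- `Res n K l M deg r`: the graded module `M` has a graded free resolution with at most `l` free
modules in which the `i`-th one is generated in degrees `≤ r + i`. The resolution is encoded one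
syzygy module at a time, and the cover of each syzygy module is required to be surjective in each
degree as well as globally, so that no decomposition into homogeneous parts is ever needed. -/
def Res : ℕ → (M : Type) → [AddCommGroup M] → [Module S M] → (ℕ → Set M) → ℕ → Prop
  | 0, M, _, _, _, _ => Subsingleton M
  | l + 1, M, _, _, deg, r => ∃ (k : ℕ) (shift : Fin k → ℕ) (φ : (Fin k → S) →ₗ[S] M),
      (∀ a, shift a ≤ r) ∧ (∀ a, φ (Pi.single a 1) ∈ deg (shift a)) ∧
      Function.Surjective φ ∧ (∀ d, ∀ m ∈ deg d, ∃ f ∈ freeDeg shift d, φ f = m) ∧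
      Res l (LinearMap.ker φ) (fun d => {f | (f : Fin k → S) ∈ freeDeg shift d}) (r + 1)

lemma Res.of_subsingleton (l : ℕ) : ∀ (M : Type) [AddCommGroup M] [Module S M] (deg : ℕ → Set M)
    (r : ℕ), Subsingleton M → Res n K l M deg r := by
  induction l with
  | zero => intro M _ _ deg r h; exact h
  | succ l ih =>
    intro M _ _ deg r h
    refine ⟨0, fun _ => 0, 0, fun a => a.elim0, fun a => a.elim0, fun m => ⟨0, Subsingleton.elim _ _⟩,
      fun d m _ => ⟨0, fun a => a.elim0, Subsingleton.elim _ _⟩, ih _ _ _ ?_⟩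
    exact ⟨fun a b => Subtype.ext (Subsingleton.elim _ _)⟩

lemma Res.mono (l : ℕ) : ∀ {l' r r' : ℕ} {M : Type} [AddCommGroup M] [Module S M]
    {deg : ℕ → Set M}, l ≤ l' → r ≤ r' → Res n K l M deg r → Res n K l' M deg r' := by
  induction l with
  | zero => intro l' r r' M _ _ deg _ _ h; exact Res.of_subsingleton _ _ _ _ h
  | succ l ih =>
    intro l' r r' M _ _ deg hl hr h
    obtain ⟨l', rfl⟩ : ∃ m, l' = m + 1 := ⟨l' - 1, by omega⟩
    obtain ⟨k, sh, φ, h1, h2, h3, h4, h5⟩ := h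
    exact ⟨k, sh, φ, fun a => (h1 a).trans hr, h2, h3, h4, ih (by omega) (by omega) h5⟩

/-- A short exact sequence `0 → A → B → C → 0` of graded modules, exact globally and in each
degree. -/
structure SES {A B C : Type} [AddCommGroup A] [Module S A] [AddCommGroup B] [Module S B]
    [AddCommGroup C] [Module S C] (degA : ℕ → Set A) (degB : ℕ → Set B) (degC : ℕ → Set C)
    (i : A →ₗ[S] B) (p : B →ₗ[S] C) : Prop where
  inj : Function.Injective i
  comp : ∀ a, p (i a) = 0
  exact : ∀ b, p b = 0 → ∃ a, i a = b
  surj : Function.Surjective p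
  deg_i : ∀ d a, a ∈ degA d ↔ i a ∈ degB d
  deg_p : ∀ d, ∀ b ∈ degB d, p b ∈ degC d
  surj_deg : ∀ d, ∀ c ∈ degC d, ∃ b ∈ degB d, p b = c

lemma freeDeg_append {k k' : ℕ} {sh : Fin k → ℕ} {sh' : Fin k' → ℕ} {d : ℕ}
    {f : Fin (k + k') → S} : f ∈ freeDeg (Fin.append sh sh') d ↔
      (fun a => f (Fin.castAdd k' a)) ∈ freeDeg sh d ∧
      (fun a => f (Fin.natAdd k a)) ∈ freeDeg sh' d := by
  simp only [freeDeg, Set.mem_ofPred_eq]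
  constructor
  · intro h
    exact ⟨fun a => by simpa using h (Fin.castAdd k' a), fun a => by simpa using h (Fin.natAdd k a)⟩
  · rintro ⟨h, hr⟩ a
    refine Fin.addCases (fun a => ?_) (fun a => ?_) a
    · simpa using h a
    · simpa using hr a

/-- The horseshoe lemma: in a short exact sequence, the bounds for the outer terms pass to the
middle term. -/
lemma Res.horseshoe (l : ℕ) : ∀ {r : ℕ} {A B C : Type} [AddCommGroup A] [Module S A]
    [AddCommGroup B] [Module S B] [AddCommGroup C] [Module S C] {degA : ℕ → Set A}
    {degB : ℕ → Set B} {degC : ℕ → Set C} {i : A →ₗ[S] B} {p : B →ₗ[S] C},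
    SES degA degB degC i p → IsGr n K degB →
    Res n K l A degA r → Res n K l C degC r → Res n K l B degB r := by
  induction l with
  | zero =>
    intro r A B C _ _ _ _ _ _ degA degB degC i p h _ hA hC
    have hA : Subsingleton A := hA
    have hC : Subsingleton C := hC
    refine ⟨fun x y => ?_⟩
    obtain ⟨a, rfl⟩ := h.exact x (Subsingleton.elim _ _)
    obtain ⟨b, rfl⟩ := h.exact y (Subsingleton.elim _ _)
    rw [Subsingleton.elim a b]
  | succ l ih =>
    intro r A B C _ _ _ _ _ _ degA degB degC i p h hB hA hC
    obtain ⟨k, sh, φ, h1, h2, h3, h4, h5⟩ := hA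
    obtain ⟨k', sh', φ', h1', hC2, h3', h4', h5'⟩ := hC
    choose c hc hpc using fun a => h.surj_deg _ _ (hC2 a)
    -- `ψ` lifts `φ'` through `p`, preserving degrees.
    let ψ : (Fin k' → S) →ₗ[S] B := Fintype.linearCombination S c
    have hψ1 : ∀ a, ψ (Pi.single a 1) = c a := fun a => by
      simp [ψ, Fintype.linearCombination_apply_single]
    have hψp : p ∘ₗ ψ = φ' := by
      refine LinearMap.pi_ext' fun a => LinearMap.ext_ring ?_
      simp [hψ1, hpc]
    have hψp' : ∀ f, p (ψ f) = φ' f := fun f => LinearMap.congr_fun hψp f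
    have hψd : ∀ d f, f ∈ freeDeg sh' d → ψ f ∈ degB d := fun d f hf =>
      map_freeDeg hB ψ (fun a => by rw [hψ1]; exact hc a) hf
    have hφd : ∀ d f, f ∈ freeDeg sh d → i (φ f) ∈ degB d := fun d f hf =>
      map_freeDeg hB (i ∘ₗ φ) (fun a => (h.deg_i _ _).1 (h2 a)) hf
    let q : (Fin (k + k') → S) →ₗ[S] (Fin k → S) := LinearMap.funLeft S S (Fin.castAdd k')
    let q' : (Fin (k + k') → S) →ₗ[S] (Fin k' → S) := LinearMap.funLeft S S (Fin.natAdd k)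
    let Φ : (Fin (k + k') → S) →ₗ[S] B := i ∘ₗ φ ∘ₗ q + ψ ∘ₗ q'
    have hΦ : ∀ f, Φ f = i (φ (q f)) + ψ (q' f) := fun f => rfl
    have hqa : ∀ f g, q (Fin.append f g) = f := fun f g => by
      ext1 a; simp [q, LinearMap.funLeft_apply]
    have hqa' : ∀ f g, q' (Fin.append f g) = g := fun f g => by
      ext1 a; simp [q', LinearMap.funLeft_apply]
    have hdeg : ∀ d f, f ∈ freeDeg (Fin.append sh sh') d ↔ q f ∈ freeDeg sh d ∧
      q' f ∈ freeDeg sh' d := fun d f => freeDeg_append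
    have hext : ∀ f g, q f = q g → q' f = q' g → f = g := fun f g e e' => by
      ext1 a
      refine Fin.addCases (fun a => ?_) (fun a => ?_) a
      · exact congrFun e a
      · exact congrFun e' a
    refine ⟨k + k', Fin.append sh sh', Φ, ?_, ?_, ?_, ?_, ?_⟩
    · intro a
      refine Fin.addCases (fun a => ?_) (fun a => ?_) a
      · simpa using h1 a
      · simpa using h1' a
    · intro a
      have hone : (Pi.single a 1 : Fin (k + k') → S) ∈
          freeDeg (Fin.append sh sh') (Fin.append sh sh' a) := by
        intro b
        by_cases hb : b = a
        · subst hb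
          exact Or.inr ⟨0, by simp, by simpa using isHomogeneous_one _ _⟩
        · exact Or.inl (by simp [hb])
      rw [hΦ]
      exact hB.add_mem _ _ _ (hφd _ _ ((hdeg _ _).1 hone).1) (hψd _ _ ((hdeg _ _).1 hone).2)
    · intro b
      obtain ⟨g, hg⟩ := h3' (p b)
      obtain ⟨a, ha⟩ := h.exact (b - ψ g) (by rw [map_sub, hψp', hg, sub_self])
      obtain ⟨f, rfl⟩ := h3 a
      exact ⟨Fin.append f g, by rw [hΦ, hqa, hqa', ha]; abel⟩
    · intro d b hb
      obtain ⟨g, hgd, hg⟩ := h4' d (p b) (h.deg_p _ _ hb)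
      obtain ⟨a, ha⟩ := h.exact (b - ψ g) (by rw [map_sub, hψp', hg, sub_self])
      obtain ⟨f, hfd, rfl⟩ := h4 d a
        ((h.deg_i _ _).2 (by rw [ha]; exact hB.sub_mem hb (hψd _ _ hgd)))
      exact ⟨Fin.append f g, (hdeg _ _).2 (by rw [hqa, hqa']; exact ⟨hfd, hgd⟩),
        by rw [hΦ, hqa, hqa', ha]; abel⟩
    · -- The kernels form a short exact sequence, by the snake lemma.
      let ι : (Fin k → S) →ₗ[S] (Fin (k + k') → S) :=
        { toFun := fun f => Fin.append f 0
          map_add' := fun f g => hext _ _ (by simp [hqa]) (by simp [hqa'])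
          map_smul' := fun s f => hext _ _ (by simp [hqa]) (by simp [hqa']) }
      have hι : ∀ f, q (ι f) = f := fun f => hqa _ _
      have hι' : ∀ f, q' (ι f) = 0 := fun f => hqa' _ _
      have hιk : ∀ f ∈ LinearMap.ker φ, ι f ∈ LinearMap.ker Φ := fun f hf => by
        rw [LinearMap.mem_ker, hΦ, hι, hι', LinearMap.mem_ker.1 hf]; simp
      have hqk : ∀ f ∈ LinearMap.ker Φ, q' f ∈ LinearMap.ker φ' := fun f hf => by
        have := congrArg p (LinearMap.mem_ker.1 hf)
        rwa [hΦ, map_add, h.comp, zero_add, hψp', map_zero] at this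
      refine ih (i := ι.restrict hιk) (p := q'.restrict hqk) ⟨?_, ?_, ?_, ?_, ?_, ?_, ?_⟩
        ((isGr_freeDeg _).submodule _) h5 h5'
      · intro f g hfg
        have := congrArg (fun x => q x.1) hfg
        exact Subtype.ext (by simpa [hι] using this)
      · intro f
        exact Subtype.ext (hι' _)
      · rintro ⟨f, hf⟩ h0
        have h0 : q' f = 0 := congrArg Subtype.val h0
        refine ⟨⟨q f, ?_⟩, Subtype.ext (hext _ _ (hι _) ((hι' _).trans h0.symm))⟩
        rw [LinearMap.mem_ker, hΦ, h0, map_zero, add_zero] at hf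
        exact h.inj (by rw [hf, map_zero])
      · rintro ⟨g, hg⟩
        obtain ⟨a, ha⟩ := h.exact (-ψ g) (by
          rw [map_neg, hψp', LinearMap.mem_ker.1 hg, neg_zero])
        obtain ⟨f, rfl⟩ := h3 a
        exact ⟨⟨Fin.append f g, by rw [LinearMap.mem_ker, hΦ, hqa, hqa', ha]; simp⟩,
          Subtype.ext (hqa' _ _)⟩
      · rintro d ⟨f, hf⟩
        show f ∈ freeDeg sh d ↔ ι f ∈ freeDeg (Fin.append sh sh') d
        rw [hdeg, hι, hι']
        exact (and_iff_left ((isGr_freeDeg _).zero_mem _)).symm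
      · rintro d ⟨f, hf⟩ hfd
        exact ((hdeg _ _).1 hfd).2
      · rintro d ⟨g, hg⟩ hgd
        obtain ⟨a, ha⟩ := h.exact (-ψ g) (by
          rw [map_neg, hψp', LinearMap.mem_ker.1 hg, neg_zero])
        obtain ⟨f, hfd, rfl⟩ := h4 d a
          ((h.deg_i _ _).2 (by rw [ha]; exact hB.neg_mem (hψd _ _ hgd)))
        exact ⟨⟨Fin.append f g, by rw [LinearMap.mem_ker, hΦ, hqa, hqa', ha]; simp⟩,
          (hdeg _ (Fin.append f g)).2 (by rw [hqa, hqa']; exact ⟨hfd, hgd⟩),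
          Subtype.ext (hqa' _ _)⟩

/-- In a short exact sequence `0 → A → B → C → 0`, the bound `r + 1` for `A` and `r` for `B` give
the bound `r` for `C`: a free cover of `B` also covers `C`, and the first syzygies of `C` are an
extension of `A` by those of `B`. -/
lemma Res.third {l r : ℕ} {A B C : Type} [AddCommGroup A] [Module S A]
    [AddCommGroup B] [Module S B] [AddCommGroup C] [Module S C] {degA : ℕ → Set A}
    {degB : ℕ → Set B} {degC : ℕ → Set C} {i : A →ₗ[S] B} {p : B →ₗ[S] C}
    (h : SES degA degB degC i p) (hB : IsGr n K degB)
    (hA : Res n K l A degA (r + 1)) (hR : Res n K (l + 1) B degB r) : Res n K (l + 1) C degC r := by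
  obtain ⟨k, sh, φ, h1, h2, h3, h4, h5⟩ := hR
  refine ⟨k, sh, p ∘ₗ φ, h1, fun a => h.deg_p _ _ (h2 a), h.surj.comp h3, ?_, ?_⟩
  · intro d c hc
    obtain ⟨b, hb, rfl⟩ := h.surj_deg d c hc
    obtain ⟨f, hf, rfl⟩ := h4 d b hb
    exact ⟨f, hf, rfl⟩
  · have hk : ∀ f ∈ LinearMap.ker φ, f ∈ LinearMap.ker (p ∘ₗ φ) := fun f hf => by
      rw [LinearMap.mem_ker, LinearMap.comp_apply, LinearMap.mem_ker.1 hf, map_zero]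
    have hr : ∀ f : LinearMap.ker (p ∘ₗ φ), φ f.1 ∈ LinearMap.range i := fun f =>
      h.exact _ f.2
    let e := LinearEquiv.ofInjective i h.inj
    let π : LinearMap.ker (p ∘ₗ φ) →ₗ[S] A := e.symm.toLinearMap ∘ₗ
      (φ ∘ₗ (LinearMap.ker (p ∘ₗ φ)).subtype).codRestrict (LinearMap.range i) hr
    have hπ : ∀ f, i (π f) = φ f.1 := fun f => by
      have := congrArg Subtype.val (e.apply_symm_apply ⟨φ f.1, hr f⟩)
      exact this
    refine Res.horseshoe l (i := Submodule.inclusion hk) (p := π) ⟨?_, ?_, ?_, ?_, ?_, ?_, ?_⟩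
      ((isGr_freeDeg _).submodule _) h5 hA
    · exact Submodule.inclusion_injective _
    · rintro ⟨f, hf⟩
      exact h.inj (by rw [hπ, map_zero]; exact hf)
    · rintro f hf
      have := hπ f
      rw [hf, map_zero] at this
      exact ⟨⟨f.1, this.symm⟩, rfl⟩
    · intro a
      obtain ⟨f, hf⟩ := h3 (i a)
      have hfk : f ∈ LinearMap.ker (p ∘ₗ φ) := by
        rw [LinearMap.mem_ker, LinearMap.comp_apply, hf, h.comp]
      exact ⟨⟨f, hfk⟩, h.inj (by rw [hπ, hf])⟩
    · rintro d ⟨f, hf⟩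
      exact Iff.rfl
    · rintro d f hf
      rw [h.deg_i, hπ]
      exact map_freeDeg hB φ h2 hf
    · intro d a ha
      obtain ⟨f, hfd, hf⟩ := h4 d (i a) ((h.deg_i _ _).1 ha)
      have hfk : f ∈ LinearMap.ker (p ∘ₗ φ) := by
        rw [LinearMap.mem_ker, LinearMap.comp_apply, hf, h.comp]
      exact ⟨⟨f, hfk⟩, hfd, h.inj (by rw [hπ, hf])⟩

/-- The graded free module `S(-t)`. -/
lemma Res.free {t r : ℕ} (h : t ≤ r) : Res n K 1 S (tw t) r := by
  refine ⟨1, fun _ => t, LinearMap.proj 0, fun _ => h, ?_, ?_, ?_, ?_⟩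
  · intro a
    obtain rfl : a = 0 := Subsingleton.elim _ _
    exact Or.inr ⟨0, rfl, by simpa using isHomogeneous_one _ _⟩
  · intro s
    exact ⟨fun _ => s, rfl⟩
  · intro d m hm
    exact ⟨fun _ => m, fun _ => hm, rfl⟩
  · refine ⟨fun x y => Subtype.ext (funext fun a => ?_)⟩
    obtain rfl : a = 0 := Subsingleton.elim _ _
    exact (show x.1 0 = 0 from x.2).trans (show y.1 0 = 0 from y.2).symm

lemma Res.prod {l r : ℕ} {M N : Type} [AddCommGroup M] [Module S M] [AddCommGroup N] [Module S N]
    {degM : ℕ → Set M} {degN : ℕ → Set N} (hM : IsGr n K degM)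
    (hN : IsGr n K degN) (h : Res n K l M degM r) (h' : Res n K l N degN r) :
    Res n K l (M × N) (fun d => degM d ×ˢ degN d) r := by
  refine Res.horseshoe l (i := LinearMap.inl S M N) (p := LinearMap.snd S M N)
    ⟨?_, ?_, ?_, ?_, ?_, ?_, ?_⟩ (hM.prod hN) h h'
  · exact LinearMap.inl_injective
  · intro a; rfl
  · rintro ⟨a, b⟩ hb
    exact ⟨a, Prod.ext rfl (show b = 0 from hb).symm⟩
  · exact Prod.snd_surjective
  · intro d a
    exact ⟨fun ha => ⟨ha, hN.zero_mem d⟩, fun ha => ha.1⟩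
  · rintro d b hb
    exact hb.2
  · intro d c hc
    exact ⟨(0, c), ⟨hM.zero_mem d, hc⟩, rfl⟩

/-- The bound for `M ⊕ S(-t)` passes to `M`, provided `t ≤ r + 1`. -/
lemma Res.of_prod_free {l t r : ℕ} (ht : t ≤ r + 1) {M : Type} [AddCommGroup M] [Module S M]
    {degM : ℕ → Set M} (hM : IsGr n K degM)
    (h : Res n K l (M × S) (fun d => degM d ×ˢ tw t d) r) : Res n K (l + 2) M degM r := by
  refine Res.third (i := LinearMap.inr S M S) (p := LinearMap.fst S M S)
    ⟨?_, ?_, ?_, ?_, ?_, ?_, ?_⟩ (hM.prod (isGr_tw t)) ((Res.free ht).mono 1 (by omega) le_rfl)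
    (h.mono l (by omega) le_rfl)
  · exact LinearMap.inr_injective
  · intro a; rfl
  · rintro ⟨a, b⟩ hb
    exact ⟨b, Prod.ext (show a = 0 from hb).symm rfl⟩
  · exact Prod.fst_surjective
  · intro d a
    exact ⟨fun ha => ⟨hM.zero_mem d, ha⟩, fun ha => ha.2⟩
  · rintro d b hb
    exact hb.1
  · intro d c hc
    exact ⟨(c, 0), ⟨hc, (isGr_tw t).zero_mem d⟩, rfl⟩

end Homological

/-! ### Monomial ideals, colon ideals and variables -/

section Monomial

variable {n : ℕ} {K : Type} [Field K]

local notation "S" => MvPolynomial (Fin n) K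

variable (K) in
/-- The monomial ideal spanned by the monomials whose exponents satisfy `P`. -/
noncomputable def monIdeal (P : (Fin n →₀ ℕ) → Prop) (hP : ∀ a b, a ≤ b → P a → P b) : Ideal S :=
  restrictSupportIdeal K {m | P m} fun a b => hP a b

lemma mem_monIdeal {P : (Fin n →₀ ℕ) → Prop} {hP : ∀ a b, a ≤ b → P a → P b} {p : S} :
    p ∈ monIdeal K P hP ↔ ∀ m, coeff m p ≠ 0 → P m := by
  change (↑p.support : Set (Fin n →₀ ℕ)) ⊆ {m | P m} ↔ _
  simp [Set.subset_def]

/-- `I` has regularity at most `r`. The bound `r + t` for all twists `I(-t)` is part of the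
definition, so that no separate shifting lemma for `Res` is needed. -/
def RegLE (I : Ideal S) (r : ℕ) : Prop :=
  ∀ t, ∃ l, Res n K l I (fun d => {p | (p : S) ∈ tw t d}) (r + t)

lemma RegLE.mono {I : Ideal S} {r r' : ℕ} (h : r ≤ r') (hI : RegLE I r) : RegLE I r' := fun t =>
  (hI t).imp fun l hl => hl.mono l le_rfl (by omega)

lemma tw_X_mul {t d : ℕ} {s : S} (x : Fin n) (h : s ∈ tw (t + 1) d) : X x * s ∈ tw t d := by
  rcases h with rfl | ⟨e, he, hs⟩
  · exact Or.inl (by simp)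
  · exact Or.inr ⟨1 + e, by omega, (isHomogeneous_X K x).mul hs⟩

lemma tw_mod {t d : ℕ} {h : S} (x : Fin n) (hh : h ∈ tw t d) :
    h.modMonomial (Finsupp.single x 1) ∈ tw t d := by
  rcases hh with rfl | ⟨e, he, hs⟩
  · refine Or.inl (MvPolynomial.ext _ _ fun m => ?_)
    by_cases hm : Finsupp.single x 1 ≤ m
    · rw [coeff_modMonomial_of_le _ hm, coeff_zero]
    · rw [coeff_modMonomial_of_not_le _ hm]
  · refine Or.inr ⟨e, he, fun m hm => ?_⟩
    by_cases hx : Finsupp.single x 1 ≤ m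
    · rw [coeff_modMonomial_of_le _ hx] at hm
      exact absurd rfl hm
    · rw [coeff_modMonomial_of_not_le _ hx] at hm
      exact hs hm

lemma tw_div {t d : ℕ} {h : S} (x : Fin n) (hh : h ∈ tw t d) :
    h.divMonomial (Finsupp.single x 1) ∈ tw (t + 1) d := by
  rcases hh with rfl | ⟨e, he, hs⟩
  · exact Or.inl (zero_divMonomial _)
  · have key : ∀ m, coeff m (h.divMonomial (Finsupp.single x 1)) ≠ 0 →
        1 + Finsupp.weight 1 m = e := fun m hm => by
      rw [coeff_divMonomial] at hm
      have := hs hm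
      rwa [map_add, Finsupp.weight_single, Pi.one_apply, smul_eq_mul, mul_one] at this
    cases e with
    | zero =>
      refine Or.inl (MvPolynomial.ext _ _ fun m => ?_)
      by_contra hm
      have := key m hm
      omega
    | succ e =>
      refine Or.inr ⟨e, by omega, fun m hm => ?_⟩
      have := key m hm
      omega

/-- The exact sequence `0 → (J : x)(-1) → J ⊕ S(-1) → J + (x) → 0` of a monomial ideal `J` and a
variable `x`, with `s ↦ (-x s, s)` and `(j, s) ↦ j + x s`, twisted by `t`. -/
lemma exists_ses {P L Q : (Fin n →₀ ℕ) → Prop} {hP : ∀ a b, a ≤ b → P a → P b}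
    {hL : ∀ a b, a ≤ b → L a → L b} {hQ : ∀ a b, a ≤ b → Q a → Q b} (x : Fin n)
    (hPL : ∀ m, L m ↔ P (Finsupp.single x 1 + m)) (hPQ : ∀ m, Q m ↔ P m ∨ m x ≠ 0) (t : ℕ) :
    ∃ (i : monIdeal K L hL →ₗ[S] monIdeal K P hP × S)
      (p : monIdeal K P hP × S →ₗ[S] monIdeal K Q hQ), SES
      (fun d => {f : monIdeal K L hL | (f : S) ∈ tw (t + 1) d})
      (fun d => {f : monIdeal K P hP | (f : S) ∈ tw t d} ×ˢ (tw (t + 1) d : Set S))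
      (fun d => {f : monIdeal K Q hQ | (f : S) ∈ tw t d}) i p := by
  have hLx : ∀ s : S, s ∈ monIdeal K L hL ↔ X x * s ∈ monIdeal K P hP := fun s => by
    rw [mem_monIdeal, mem_monIdeal]
    constructor
    · intro h m hm
      rw [coeff_X_mul'] at hm
      split_ifs at hm with hx
      · have := (hPL _).1 (h _ hm)
        rwa [add_tsub_cancel_of_le] at this
        simpa [Nat.one_le_iff_ne_zero] using hx
      · exact absurd rfl hm
    · intro h m hm
      rw [hPL]
      refine h _ ?_
      rwa [coeff_X_mul]
  have hPQ' : monIdeal K P hP ≤ monIdeal K Q hQ := fun p hp =>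
    mem_monIdeal.2 fun m hm => (hPQ m).2 (Or.inl (mem_monIdeal.1 hp m hm))
  have hXQ : ∀ s : S, X x * s ∈ monIdeal K Q hQ := fun s =>
    mem_monIdeal.2 fun m hm => by
      rw [coeff_X_mul'] at hm
      split_ifs at hm with hx
      · exact (hPQ m).2 (Or.inr (by simpa using hx))
      · exact absurd rfl hm
  -- Monomials not divisible by `x` that lie in `J + (x)` lie in `J`.
  have hmod : ∀ h ∈ monIdeal K Q hQ, h.modMonomial (Finsupp.single x 1) ∈ monIdeal K P hP :=
    fun h hh => mem_monIdeal.2 fun m hm => by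
      by_cases hx : Finsupp.single x 1 ≤ m
      · rw [coeff_modMonomial_of_le _ hx] at hm
        exact absurd rfl hm
      · rw [coeff_modMonomial_of_not_le _ hx] at hm
        refine ((hPQ m).1 (mem_monIdeal.1 hh m hm)).resolve_right fun h0 => hx ?_
        simpa [Nat.one_le_iff_ne_zero] using h0
  let μ : S →ₗ[S] S := LinearMap.mulLeft S (X x)
  have hμ : ∀ s, μ s = X x * s := fun s => rfl
  let i : monIdeal K L hL →ₗ[S] monIdeal K P hP × S :=
    (-(μ.restrict fun s hs => (hLx s).1 hs)).prod (monIdeal K L hL).subtype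
  let p : monIdeal K P hP × S →ₗ[S] monIdeal K Q hQ :=
    (Submodule.inclusion hPQ').coprod (μ.codRestrict _ hXQ)
  have hi1 : ∀ s, ((i s).1 : S) = -(X x * (s : S)) := fun s => rfl
  have hi2 : ∀ s, (i s).2 = s := fun s => rfl
  have hp : ∀ b, (p b : S) = (b.1 : S) + X x * b.2 := fun b => rfl
  have hsurj : ∀ c : monIdeal K Q hQ,
      p (⟨_, hmod c.1 c.2⟩, (c : S).divMonomial (Finsupp.single x 1)) = c := fun c =>
    Subtype.ext (by rw [hp]; exact modMonomial_add_divMonomial_single _ _)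
  refine ⟨i, p, ⟨?_, ?_, ?_, ?_, ?_, ?_, ?_⟩⟩
  · intro a b hab
    exact Subtype.ext (congrArg Prod.snd hab)
  · intro a
    exact Subtype.ext (by rw [hp, hi1, hi2]; simp)
  · rintro ⟨j, s⟩ h0
    have h1 : (j : S) + X x * s = 0 := congrArg Subtype.val h0
    have h2 : X x * s = -(j : S) := by linear_combination h1
    refine ⟨⟨s, (hLx s).2 (by rw [h2]; exact neg_mem j.2)⟩, Prod.ext (Subtype.ext ?_) rfl⟩
    rw [hi1, h2, neg_neg]
  · intro c
    exact ⟨_, hsurj c⟩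
  · intro d a
    exact ⟨fun h => ⟨(isGr_tw t).neg_mem (tw_X_mul x h), h⟩, fun h => h.2⟩
  · rintro d b ⟨h1, h2⟩
    exact (isGr_tw t).add_mem _ _ _ h1 (tw_X_mul x h2)
  · intro d c hc
    exact ⟨(⟨_, hmod c.1 c.2⟩, _), ⟨tw_mod x hc, tw_div x hc⟩, hsurj c⟩

lemma isGr_ideal (I : Ideal S) (t : ℕ) : IsGr n K (fun d => {p : I | (p : S) ∈ tw t d}) :=
  (isGr_tw t).submodule I

/-- `reg J ≤ max (reg (J : x) + 1) (reg (J + (x)))`, where `L` and `Q` describe the monomials of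
`J : x` and `J + (x)`. -/
lemma RegLE.of_colon {P L Q : (Fin n →₀ ℕ) → Prop} {hP : ∀ a b, a ≤ b → P a → P b}
    {hL : ∀ a b, a ≤ b → L a → L b} {hQ : ∀ a b, a ≤ b → Q a → Q b} (x : Fin n)
    (hPL : ∀ m, L m ↔ P (Finsupp.single x 1 + m)) (hPQ : ∀ m, Q m ↔ P m ∨ m x ≠ 0) {r : ℕ}
    (h1 : RegLE (monIdeal K L hL) r) (h2 : RegLE (monIdeal K Q hQ) (r + 1)) :
    RegLE (monIdeal K P hP) (r + 1) := by
  intro t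
  obtain ⟨l, hl⟩ := h1 (t + 1)
  obtain ⟨l', hl'⟩ := h2 t
  obtain ⟨i, p, h⟩ := exists_ses (K := K) (hP := hP) (hL := hL) (hQ := hQ) x hPL hPQ t
  refine ⟨max l l' + 2, Res.of_prod_free (t := t + 1) (by omega) (isGr_ideal _ _) ?_⟩
  exact Res.horseshoe _ h ((isGr_ideal _ _).prod (isGr_tw _))
    (hl.mono l (le_max_left _ _) (by omega)) (hl'.mono l' (le_max_right _ _) le_rfl)

/-- If `x` is a nonzerodivisor modulo `J`, then `reg (J + (x)) ≤ max (reg J) 1`. -/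
lemma RegLE.add_var {P Q : (Fin n →₀ ℕ) → Prop} {hP : ∀ a b, a ≤ b → P a → P b}
    {hQ : ∀ a b, a ≤ b → Q a → Q b} (x : Fin n)
    (hPL : ∀ m, P m ↔ P (Finsupp.single x 1 + m)) (hPQ : ∀ m, Q m ↔ P m ∨ m x ≠ 0) {r : ℕ}
    (h1 : RegLE (monIdeal K P hP) (r + 1)) : RegLE (monIdeal K Q hQ) (r + 1) := by
  intro t
  obtain ⟨l, hl⟩ := h1 (t + 1)
  obtain ⟨l', hl'⟩ := h1 t
  obtain ⟨i, p, h⟩ := exists_ses (K := K) (hP := hP) (hL := hP) (hQ := hQ) x hPL hPQ t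
  refine ⟨max l l' + 1 + 1, Res.third h ((isGr_ideal _ _).prod (isGr_tw _))
    (hl.mono l (by omega) (by omega)) ?_⟩
  exact Res.prod (isGr_ideal _ _) (isGr_tw _) (hl'.mono l' (by omega) le_rfl)
    ((Res.free (by omega)).mono 1 (by omega) le_rfl)

end Monomial

/-! ### Edge ideals and maximal matchings -/

section Graph

variable {n : ℕ} {K : Type} [Field K]

local notation "S" => MvPolynomial (Fin n) K

/-- The exponents of the monomials lying in `I(G) + (x_a : a ∈ A)`. -/
def GExp (G : SimpleGraph (Fin n)) (A : Finset (Fin n)) (m : Fin n →₀ ℕ) : Prop :=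
  (∃ i j, G.Adj i j ∧ m i ≠ 0 ∧ m j ≠ 0) ∨ ∃ a ∈ A, m a ≠ 0

lemma GExp.mono (G : SimpleGraph (Fin n)) (A : Finset (Fin n)) (m m' : Fin n →₀ ℕ) (h : m ≤ m')
    (hm : GExp G A m) : GExp G A m' := by
  have hle : ∀ i, m i ≠ 0 → m' i ≠ 0 := fun i hi => by have := h i; omega
  rcases hm with ⟨i, j, hij, hi, hj⟩ | ⟨a, ha, h0⟩
  · exact Or.inl ⟨i, j, hij, hle i hi, hle j hj⟩
  · exact Or.inr ⟨a, ha, hle a h0⟩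

variable (K) in
/-- The ideal `I(G) + (x_a : a ∈ A)`. -/
noncomputable def graphIdeal (G : SimpleGraph (Fin n)) (A : Finset (Fin n)) : Ideal S :=
  monIdeal K (GExp G A) (GExp.mono G A)

lemma edgeIdeal_eq (G : SimpleGraph (Fin n)) : edgeIdeal K G = graphIdeal K G ∅ := by
  have h : { m : S | ∃ i j, G.Adj i j ∧ m = X i * X j } = (fun s => monomial s (1 : K)) ''
      {s | ∃ i j, G.Adj i j ∧ s = Finsupp.single i 1 + Finsupp.single j 1} := by
    ext m
    constructor
    · rintro ⟨i, j, hij, rfl⟩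
      exact ⟨_, ⟨i, j, hij, rfl⟩, by simp [X, monomial_mul]⟩
    · rintro ⟨_, ⟨i, j, hij, rfl⟩, rfl⟩
      exact ⟨i, j, hij, by simp [X, monomial_mul]⟩
  ext p
  rw [edgeIdeal, h, mem_ideal_span_monomial_image, graphIdeal, mem_monIdeal]
  refine forall_congr' fun m => ?_
  rw [mem_support_iff]
  refine imp_congr_right fun _ => ?_
  constructor
  · rintro ⟨_, ⟨i, j, hij, rfl⟩, hle⟩
    have h1 := hle i
    have h2 := hle j
    simp only [Finsupp.add_apply, Finsupp.single_eq_same] at h1 h2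
    exact Or.inl ⟨i, j, hij, by omega, by omega⟩
  · rintro (⟨i, j, hij, hi, hj⟩ | ⟨a, ha, _⟩)
    · refine ⟨_, ⟨i, j, hij, rfl⟩, fun k => ?_⟩
      have hne := hij.ne
      simp only [Finsupp.add_apply, Finsupp.single_apply]
      split_ifs with h1 h2 h2
      · exact absurd (h1.trans h2.symm) hne
      · subst h1; omega
      · subst h2; omega
      · omega
    · simp at ha

/-- Ideals generated by variables have regularity at most `1`. -/
lemma regLE_vars (A : Finset (Fin n)) : RegLE (graphIdeal K ⊥ A) 1 := by
  classical
  induction A using Finset.induction_on with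
  | empty =>
    refine fun t => ⟨0, ⟨fun x y => ?_⟩⟩
    have h0 : ∀ x : graphIdeal K (⊥ : SimpleGraph (Fin n)) ∅, x = 0 := fun x => by
      refine Subtype.ext (MvPolynomial.ext _ _ fun m => ?_)
      by_contra hm
      simpa [GExp] using mem_monIdeal.1 x.2 m hm
    rw [h0 x, h0 y]
  | insert x A hx ih =>
    refine RegLE.add_var (r := 0) x (fun m => ?_) (fun m => ?_) ih
    · refine or_congr (by simp) (exists_congr fun a => and_congr_right fun ha => ?_)
      have : x ≠ a := fun h => hx (h ▸ ha)
      simp [this]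
    · simp only [GExp, Finset.mem_insert, exists_eq_or_imp]
      rw [or_assoc, or_comm (a := m x ≠ 0)]

/-- Deleting a vertex `x` versus deleting its closed neighbourhood:
`reg J_A ≤ max (reg J_{A ∪ N(x)} + 1) (reg J_{A ∪ {x}})`. -/
lemma regLE_step (G : SimpleGraph (Fin n)) (A N : Finset (Fin n)) (x : Fin n)
    (hN : ∀ a, a ∈ N ↔ G.Adj x a) {r : ℕ} (h1 : RegLE (graphIdeal K G (A ∪ N)) r)
    (h2 : RegLE (graphIdeal K G (insert x A)) (r + 1)) : RegLE (graphIdeal K G A) (r + 1) := by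
  by_cases hx : x ∈ A
  · rwa [Finset.insert_eq_of_mem hx] at h2
  refine RegLE.of_colon x (fun m => ?_) (fun m => ?_) h1 h2
  · have hne : ∀ i, x ≠ i → (Finsupp.single x 1 + m : Fin n →₀ ℕ) i = m i := fun i hi => by simp [hi]
    have hxx : (Finsupp.single x 1 + m : Fin n →₀ ℕ) x ≠ 0 := by simp
    have hle : ∀ i, m i ≠ 0 → (Finsupp.single x 1 + m : Fin n →₀ ℕ) i ≠ 0 := fun i hi => by
      rw [Finsupp.add_apply]; omega
    constructor
    · rintro (⟨i, j, hij, hi, hj⟩ | ⟨a, ha, h0⟩)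
      · exact Or.inl ⟨i, j, hij, hle i hi, hle j hj⟩
      · rcases Finset.mem_union.1 ha with ha | ha
        · exact Or.inr ⟨a, ha, hle a h0⟩
        · exact Or.inl ⟨x, a, (hN a).1 ha, hxx, hle a h0⟩
    · rintro (⟨i, j, hij, hi, hj⟩ | ⟨a, ha, h0⟩)
      · by_cases hxi : x = i
        · subst hxi
          rw [hne j hij.ne] at hj
          exact Or.inr ⟨j, Finset.mem_union_right _ ((hN j).2 hij), hj⟩
        by_cases hxj : x = j
        · subst hxj
          rw [hne i hxi] at hi
          exact Or.inr ⟨i, Finset.mem_union_right _ ((hN i).2 hij.symm), hi⟩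
        · rw [hne i hxi] at hi
          rw [hne j hxj] at hj
          exact Or.inl ⟨i, j, hij, hi, hj⟩
      · rw [hne a fun h => hx (h ▸ ha)] at h0
        exact Or.inr ⟨a, Finset.mem_union_left _ ha, h0⟩
  · simp only [GExp, Finset.mem_insert, exists_eq_or_imp]
    rw [or_assoc, or_comm (a := m x ≠ 0)]

/-- If every edge of `G` avoiding `A` meets one of the edges in `M`, then
`I(G) + (x_a : a ∈ A)` has regularity at most `|M| + 1`. -/
lemma regLE_of_cover (G : SimpleGraph (Fin n)) (M : Finset (Sym2 (Fin n))) :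
    ∀ A : Finset (Fin n), (∀ e ∈ M, e ∈ G.edgeSet) →
      (∀ i j, G.Adj i j → i ∈ A ∨ j ∈ A ∨ ∃ e ∈ M, i ∈ e ∨ j ∈ e) →
      RegLE (graphIdeal K G A) (M.card + 1) := by
  classical
  induction M using Finset.induction_on with
  | empty =>
    intro A _ hA
    have h : graphIdeal K G A = graphIdeal K ⊥ A := by
      have : GExp G A = GExp ⊥ A := by
        ext m
        constructor
        · rintro (⟨i, j, hij, hi, hj⟩ | h)
          · rcases hA i j hij with h | h | ⟨e, he, _⟩
            · exact Or.inr ⟨i, h, hi⟩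
            · exact Or.inr ⟨j, h, hj⟩
            · simp at he
          · exact Or.inr h
        · rintro (⟨i, j, hij, hi, hj⟩ | h)
          · exact hij.elim
          · exact Or.inr h
      simp only [graphIdeal, this]
    rw [h]
    exact regLE_vars A
  | insert e M he ih =>
    intro A hM hA
    have hM' : ∀ e ∈ M, e ∈ G.edgeSet := fun f hf => hM f (Finset.mem_insert_of_mem hf)
    have hee := hM e (Finset.mem_insert_self _ _)
    rw [Finset.card_insert_of_notMem he]
    induction e using Sym2.ind with
    | _ u v =>
    have huv : G.Adj u v := hee
    let N : Fin n → Finset (Fin n) := fun x => Finset.univ.filter (G.Adj x)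
    have hN : ∀ x a, a ∈ N x ↔ G.Adj x a := fun x a => by simp [N]
    have hA' : ∀ i j, G.Adj i j → i ∈ A ∨ j ∈ A ∨ (i = u ∨ i = v) ∨ (j = u ∨ j = v) ∨
        ∃ e ∈ M, i ∈ e ∨ j ∈ e := fun i j hij => by
      rcases hA i j hij with h | h | ⟨f, hf, h⟩
      · exact Or.inl h
      · exact Or.inr (Or.inl h)
      · rcases Finset.mem_insert.1 hf with rfl | hf
        · rw [Sym2.mem_iff, Sym2.mem_iff] at h
          tauto
        · exact Or.inr (Or.inr (Or.inr (Or.inr ⟨f, hf, h⟩)))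
    -- Every deletion involved removes `u` and `v` or all their neighbours, so `M` still covers.
    have key : ∀ B : Finset (Fin n), A ⊆ B → (u ∈ B ∨ ∀ a, G.Adj u a → a ∈ B) →
        (v ∈ B ∨ ∀ a, G.Adj v a → a ∈ B) → RegLE (graphIdeal K G B) (M.card + 1) := by
      intro B hAB hu hv
      refine ih B hM' fun i j hij => ?_
      have h := hA' i j hij
      have hij' := hij.symm
      by_cases hi : i ∈ B
      · exact Or.inl hi
      by_cases hj : j ∈ B
      · exact Or.inr (Or.inl hj)
      rcases h with h | h | (rfl | rfl) | (rfl | rfl) | h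
      · exact Or.inl (hAB h)
      · exact Or.inr (Or.inl (hAB h))
      · exact Or.inr (Or.inl ((hu.resolve_left hi) _ hij))
      · exact Or.inr (Or.inl ((hv.resolve_left hi) _ hij))
      · exact Or.inl ((hu.resolve_left hj) _ hij')
      · exact Or.inl ((hv.resolve_left hj) _ hij')
      · exact Or.inr (Or.inr h)
    refine regLE_step G A (N u) u (hN u) ?_ (regLE_step G _ (N v) v (hN v) ?_ ?_)
    · refine key _ Finset.subset_union_left (Or.inr fun a ha => ?_) (Or.inl ?_)
      · exact Finset.mem_union_right _ ((hN u a).2 ha)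
      · exact Finset.mem_union_right _ ((hN u v).2 huv)
    · refine key _ (fun a ha => ?_) (Or.inl ?_) (Or.inr fun a ha => ?_)
      · simp [ha]
      · simp
      · exact Finset.mem_union_right _ ((hN v a).2 ha)
    · refine (key _ (fun a ha => ?_) (Or.inl ?_) (Or.inl ?_)).mono (by omega)
      · simp [ha]
      · simp
      · simp

lemma exists_isMaximalMatching (G : SimpleGraph (Fin n)) : ∃ M, IsMaximalMatching G M := by
  classical
  obtain ⟨M, hM⟩ := Set.Finite.exists_maximal (Set.toFinite {M | IsMatchingSet G M})
    ⟨∅, by simp [IsMatchingSet]⟩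
  exact ⟨M, hM.prop, fun M' hM' hle => (hM.le_of_ge hM' hle).antisymm hle⟩

lemma IsMaximalMatching.cover {G : SimpleGraph (Fin n)} {M : Finset (Sym2 (Fin n))}
    (hM : IsMaximalMatching G M) {i j : Fin n} (hij : G.Adj i j) : ∃ e ∈ M, i ∈ e ∨ j ∈ e := by
  classical
  by_contra! hcon
  have h : insert s(i, j) M = M := by
    refine hM.2 _ ⟨?_, ?_⟩ (Finset.subset_insert _ _)
    · intro e he
      rcases Finset.mem_insert.1 he with rfl | he
      · exact hij
      · exact hM.1.1 he
    · intro e he f hf hef a ha b hb hab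
      subst hab
      rcases Finset.mem_insert.1 he with rfl | he' <;>
        rcases Finset.mem_insert.1 hf with rfl | hf'
      · exact hef rfl
      · rcases Sym2.mem_iff.1 ha with rfl | rfl
        · exact (hcon f hf').1 hb
        · exact (hcon f hf').2 hb
      · rcases Sym2.mem_iff.1 hb with rfl | rfl
        · exact (hcon e he').1 ha
        · exact (hcon e he').2 ha
      · exact hM.1.2 e he' f hf' hef a ha a hb rfl
  exact (hcon s(i, j) (Finset.insert_eq_self.1 h)).1 (by simp)

end Graph

/-! ### Resolutions in matrix form -/

section Assemble

variable {n : ℕ} {K : Type} [Field K]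

local notation "S" => MvPolynomial (Fin n) K

variable (n K) in
/-- A finite graded free resolution of a graded module `M`, in matrix form. -/
structure ModRes (M : Type) [AddCommGroup M] [Module S M] (deg : ℕ → Set M) where
  len : ℕ
  rank : ℕ → ℕ
  rank_zero : ∀ i, len < i → rank i = 0
  shift : (i : ℕ) → Fin (rank i) → ℕ
  d : (i : ℕ) → ((Fin (rank (i + 1)) → S) →ₗ[S] (Fin (rank i) → S))
  aug : (Fin (rank 0) → S) →ₗ[S] M
  aug_surj : Function.Surjective aug
  exact_zero : LinearMap.ker aug = LinearMap.range (d 0)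
  exact_succ : ∀ i, LinearMap.ker (d i) = LinearMap.range (d (i + 1))
  homog_aug : ∀ a, aug (Pi.single a 1) ∈ deg (shift 0 a)
  homog_d : ∀ i b, d i (Pi.single b 1) ∈ freeDeg (shift i) (shift (i + 1) b)

/-- Splicing the successive syzygy covers into a complex. -/
lemma Res.exists_modRes (l : ℕ) : ∀ {M : Type} [AddCommGroup M] [Module S M] {deg : ℕ → Set M}
    {r : ℕ}, Res n K l M deg r →
    ∃ F : ModRes n K M deg, ∀ i a, F.shift i a ≤ r + i := by
  induction l with
  | zero =>
    intro M _ _ deg r h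
    have h : Subsingleton M := h
    refine ⟨⟨0, fun _ => 0, fun _ _ => rfl, fun _ _ => 0, fun _ => 0, 0, ?_, ?_, ?_, ?_, ?_⟩, ?_⟩
    · exact fun m => ⟨0, Subsingleton.elim _ _⟩
    · exact Subsingleton.elim _ _
    · exact fun i => Subsingleton.elim _ _
    · exact fun a => a.elim0
    · exact fun i b => b.elim0
    · exact fun i a => a.elim0
  | succ l ih =>
    intro M _ _ deg r h
    obtain ⟨k, sh, φ, h1, h2, h3, -, h5⟩ := h
    obtain ⟨F, hF⟩ := ih h5
    let rk : ℕ → ℕ := fun i => Nat.casesOn i k F.rank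
    let shf : (i : ℕ) → Fin (rk i) → ℕ := fun i => match i with
      | 0 => sh
      | i + 1 => F.shift i
    let d : (i : ℕ) → ((Fin (rk (i + 1)) → S) →ₗ[S] (Fin (rk i) → S)) := fun i => match i with
      | 0 => (LinearMap.ker φ).subtype ∘ₗ F.aug
      | i + 1 => F.d i
    refine ⟨⟨F.len + 1, rk, ?_, shf, d, φ, h3, ?_, ?_, h2, ?_⟩, ?_⟩
    · rintro (_ | i) hi
      · omega
      · exact F.rank_zero i (by omega)
    · show LinearMap.ker φ = LinearMap.range ((LinearMap.ker φ).subtype ∘ₗ F.aug)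
      rw [LinearMap.range_comp, LinearMap.range_eq_top.2 F.aug_surj, Submodule.map_top,
        Submodule.range_subtype]
    · rintro (_ | i)
      · show LinearMap.ker ((LinearMap.ker φ).subtype ∘ₗ F.aug) = LinearMap.range (F.d 0)
        rw [LinearMap.ker_comp_of_ker_eq_bot _ (Submodule.ker_subtype _), F.exact_zero]
      · exact F.exact_succ i
    · rintro (_ | i) b
      · exact F.homog_aug b
      · exact F.homog_d i b
    · rintro (_ | i) a
      · exact h1 a
      · exact (hF i a).trans (by omega)

lemma exists_gradedFreeRes {I : Ideal S} {r : ℕ} (h : RegLE I r) :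
    ∃ F : GradedFreeRes K I, ∀ i, ∀ a : Fin (F.rank i), (F.shift i a : ℤ) - (i : ℤ) ≤ r := by
  obtain ⟨l, hl⟩ := h 0
  obtain ⟨F, hF⟩ := hl.exists_modRes
  refine ⟨⟨F.len, F.rank, F.rank_zero, F.shift, F.d, I.subtype ∘ₗ F.aug, ?_, ?_, F.exact_succ, ?_,
    F.homog_d⟩, fun i a => ?_⟩
  · rw [LinearMap.range_comp, LinearMap.range_eq_top.2 F.aug_surj, Submodule.map_top,
      Submodule.range_subtype]
  · rw [LinearMap.ker_comp_of_ker_eq_bot _ (Submodule.ker_subtype _), F.exact_zero]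
  · intro a
    rcases F.homog_aug a with h0 | ⟨e, he, hh⟩
    · show (F.aug (Pi.single a 1) : S).IsHomogeneous _
      rw [h0]
      exact isHomogeneous_zero _ _ _
    · rw [zero_add] at he
      rw [he]
      exact hh
  · have := hF i a
    show (F.shift i a : ℤ) - i ≤ r
    omega

end Assemble

/-- Let `G` be a finite simple graph and `β(G)` the minimum size of a maximal
matching in `G`.  Then `reg I(G) ≤ β(G) + 1`. -/
theorem regularity_le_minMaxMatching_add_one {n : ℕ} (K : Type) [Field K]
    (G : SimpleGraph (Fin n)) :
    reg K (edgeIdeal K G) ≤ (minMaxMatching G : ℤ) + 1 := by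
  obtain ⟨M, hM, hcard⟩ : ∃ M, IsMaximalMatching G M ∧ M.card = minMaxMatching G := by
    obtain ⟨M, hM⟩ := exists_isMaximalMatching G
    exact Nat.sInf_mem (s := {k | ∃ M, IsMaximalMatching G M ∧ M.card = k}) ⟨_, M, hM, rfl⟩
  have h : RegLE (edgeIdeal K G) (M.card + 1) := by
    rw [edgeIdeal_eq]
    exact regLE_of_cover G M ∅ (fun e he => hM.1.1 he)
      fun i j hij => Or.inr (Or.inr (hM.cover hij))
  obtain ⟨F, hF⟩ := exists_gradedFreeRes h
  rw [hcard] at hF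
  rw [reg]
  by_cases hb : BddBelow { r : ℤ | ∃ F : GradedFreeRes K (edgeIdeal K G),
      ∀ i, ∀ a : Fin (F.rank i), (F.shift i a : ℤ) - (i : ℤ) ≤ r }
  · exact csInf_le hb ⟨F, fun i a => by exact_mod_cast hF i a⟩
  · -- The infimum of a set of integers without lower bound is `0` by convention; this happens
    -- for the zero ideal.
    rw [Int.csInf_of_not_bddBelow hb]
    positivity
end
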